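/- arXiv:2110.00515 — 2 statements merged into one kernel-verified Lean document; each statement's English description precedes it below -/
import Mathlib

section
/- Mahler's generalization of Siegel's theorem: let K be a number field, let S be a finite set of maximal ideals of the ring of integers of K, and let O_{K,S} be the ring of S-integers of K. If f is a polynomial with coefficients in K that is squarefree and of degree at least 3, then the set of pairs (x, y) ∈ O_{K,S} × O_{K,S} with y² = f(x) is finite. -/
open IsDedekindDomain NumberField

namespace MS
open Polynomial in
/-- Taylor expansion of `(u + d)^{-(N+1)}`. -/
noncomputable def invS {K : Type*} [Field K] (N : ℕ) (d : K) : PowerSeries K :=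
  PowerSeries.mk fun k => (-1) ^ k * ((N + k).choose N : K) * d⁻¹ ^ (N + 1 + k)

theorem invS_mul {K : Type*} [Field K] (N : ℕ) {d : K} (hd : d ≠ 0) :
    invS N d * (PowerSeries.X + PowerSeries.C d) ^ (N + 1) = 1 := by
  have h := congrArg (PowerSeries.rescale (-d⁻¹))
    (PowerSeries.mk_add_choose_mul_one_sub_pow_eq_one K N)
  rw [map_mul, map_pow, map_sub, map_one, PowerSeries.rescale_mk, PowerSeries.rescale_X] at h
  have h1 : invS N d = PowerSeries.C (d⁻¹ ^ (N + 1)) *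
      PowerSeries.mk fun k => (-d⁻¹) ^ k * ((N + k).choose N : K) := by
    ext k
    rw [PowerSeries.coeff_C_mul, invS, PowerSeries.coeff_mk, PowerSeries.coeff_mk, neg_pow d⁻¹ k]
    ring
  have h2 : (PowerSeries.X + PowerSeries.C d : PowerSeries K) =
      PowerSeries.C d * (1 - PowerSeries.C (-d⁻¹) * PowerSeries.X) := by
    rw [mul_sub, ← mul_assoc, ← map_mul]
    simp [hd, add_comm]
  rw [h1, h2, mul_pow]
  rw [mul_mul_mul_comm, h, mul_one, ← map_pow, ← map_mul]
  simp [hd]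

open Polynomial

noncomputable def ser {K : Type*} [Field K] (N : ℕ) (p q r : K) (Q : K[X]) : PowerSeries K :=
  (taylor p Q : K[X]) * (invS N (p - q) * invS N (p - r))

noncomputable def UU {K : Type*} [Field K] (N : ℕ) (p q r : K) (Q : K[X]) : K[X] :=
  taylor (-p) (PowerSeries.trunc (N + 1) (ser N p q r Q))

noncomputable def Res {K : Type*} [Field K] (N : ℕ) (p q r : K) (Q : K[X]) : K :=
  PowerSeries.coeff N (ser N p q r Q)

theorem Res_lin {K : Type*} [Field K] (N : ℕ) (p q r a b : K) (Q R : K[X]) :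
    Res N p q r (C a * Q + C b * R) = a * Res N p q r Q + b * Res N p q r R := by
  unfold Res ser
  rw [← PowerSeries.coeff_C_mul, ← PowerSeries.coeff_C_mul, ← map_add]
  congr 1
  simp only [map_add, taylor_mul, taylor_C, Polynomial.coe_add, Polynomial.coe_mul,
    Polynomial.coe_C]
  ring

theorem UU_dvd {K : Type*} [Field K] (N : ℕ) {p q r : K} (hpq : p ≠ q) (hpr : p ≠ r) (Q : K[X]) :
    (X - C p) ^ (N + 1) ∣ UU N p q r Q * ((X - C q) * (X - C r)) ^ (N + 1) - Q := by
  have key : (X : K[X]) ^ (N + 1) ∣ PowerSeries.trunc (N + 1) (ser N p q r Q) *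
      ((X + C (p - q)) * (X + C (p - r))) ^ (N + 1) - taylor p Q := by
    have h0 : ser N p q r Q * (((X + C (p - q)) * (X + C (p - r)) : K[X]) ^ (N + 1) : K[X])
        = (taylor p Q : K[X]) := by
      have h1 := invS_mul N (sub_ne_zero.2 hpq)
      have h2 := invS_mul N (sub_ne_zero.2 hpr)
      simp only [ser, Polynomial.coe_pow, Polynomial.coe_mul, Polynomial.coe_add, Polynomial.coe_X,
        Polynomial.coe_C, mul_pow]
      calc _ = (taylor p Q : PowerSeries K) *
          (invS N (p - q) * (PowerSeries.X + PowerSeries.C (p - q)) ^ (N + 1)) *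
          (invS N (p - r) * (PowerSeries.X + PowerSeries.C (p - r)) ^ (N + 1)) := by ring
        _ = _ := by rw [h1, h2]; simp
    have h3 := PowerSeries.eq_X_pow_mul_shift_add_trunc (N + 1) (ser N p q r Q)
    rw [Polynomial.X_pow_dvd_iff]
    intro d hd
    rw [← Polynomial.coeff_coe, Polynomial.coe_sub, Polynomial.coe_mul]
    refine PowerSeries.X_pow_dvd_iff.1 ?_ d hd
    rw [← h0]
    nth_rw 2 [h3]
    rw [add_mul (PowerSeries.X ^ (N + 1) * _), sub_add_cancel_right]
    rw [dvd_neg, mul_assoc]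
    exact dvd_mul_right _ _
  have := map_dvd (taylorAlgHom (-p)) key
  simp only [taylorAlgHom_apply, map_pow, map_sub, map_mul, map_add] at this
  simpa [UU, taylor_taylor, taylor_mul, sub_eq_add_neg, add_assoc] using this

theorem UU_natDegree {K : Type*} [Field K] (N : ℕ) (p q r : K) (Q : K[X]) :
    (UU N p q r Q).natDegree ≤ N := by
  rw [UU, natDegree_taylor]
  have := PowerSeries.natDegree_trunc_lt (ser N p q r Q) N
  omega

theorem UU_coeff {K : Type*} [Field K] (N : ℕ) (p q r : K) (Q : K[X]) :
    (UU N p q r Q).coeff N = Res N p q r Q := by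
  have h : (PowerSeries.trunc (N + 1) (ser N p q r Q)).natDegree ≤ N := by
    have := PowerSeries.natDegree_trunc_lt (ser N p q r Q) N
    omega
  have h0 : (PowerSeries.trunc (N + 1) (ser N p q r Q)).coeff N = Res N p q r Q := by
    rw [PowerSeries.coeff_trunc, if_pos (Nat.lt_succ_self N)]; rfl
  rw [← h0, UU]
  rcases h.lt_or_eq with h1 | h1
  · rw [coeff_eq_zero_of_natDegree_lt, coeff_eq_zero_of_natDegree_lt h1]
    rwa [natDegree_taylor]
  · have := coeff_taylor_natDegree (r := -p) (f := PowerSeries.trunc (N + 1) (ser N p q r Q))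
    rwa [leadingCoeff, h1] at this

theorem UU_degree_lt {K : Type*} [Field K] (N : ℕ) {p q r : K} {Q : K[X]}
    (h : Res N p q r Q = 0) : (UU N p q r Q).degree < N := by
  rw [degree_lt_iff_coeff_zero]
  intro m hm
  rcases hm.eq_or_lt with rfl | hm
  · rw [UU_coeff, h]
  · exact coeff_eq_zero_of_natDegree_lt (lt_of_le_of_lt (UU_natDegree N p q r Q) hm)

theorem cop {K : Type*} [Field K] (n m : ℕ) {p q : K} (hpq : p ≠ q) :
    IsCoprime ((X - C p) ^ n) ((X - C q) ^ m) :=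
  (isCoprime_X_sub_C_of_isUnit_sub (sub_ne_zero.2 hpq).isUnit).pow

theorem monicBase {K : Type*} [Field K] (n : ℕ) (q r : K) :
    Monic (((X - C q) * (X - C r)) ^ n) := ((monic_X_sub_C q).mul (monic_X_sub_C r)).pow n

theorem natDegBase {K : Type*} [Field K] (n : ℕ) (q r : K) :
    natDegree (((X - C q) * (X - C r)) ^ n) = 2 * n := by
  rw [natDegree_pow, (monic_X_sub_C q).natDegree_mul (monic_X_sub_C r)]
  simp; ring

theorem pf {K : Type*} [Field K] (N : ℕ) {p q r : K} (hpq : p ≠ q) (hpr : p ≠ r) (hqr : q ≠ r)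
    (Q : K[X]) (hQ : Q.natDegree ≤ 1) :
    UU N p q r Q * ((X - C q) * (X - C r)) ^ (N + 1) +
    UU N q r p Q * ((X - C r) * (X - C p)) ^ (N + 1) +
    UU N r p q Q * ((X - C p) * (X - C q)) ^ (N + 1) = Q := by
  set D := UU N p q r Q * ((X - C q) * (X - C r)) ^ (N + 1) +
    UU N q r p Q * ((X - C r) * (X - C p)) ^ (N + 1) +
    UU N r p q Q * ((X - C p) * (X - C q)) ^ (N + 1) with hD
  have h1 : (X - C p) ^ (N + 1) ∣ D - Q := by
    have := UU_dvd N hpq hpr Q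
    have h2 : D - Q = (UU N p q r Q * ((X - C q) * (X - C r)) ^ (N + 1) - Q) +
      (X - C p) ^ (N + 1) * (UU N q r p Q * (X - C r) ^ (N + 1) +
        UU N r p q Q * (X - C q) ^ (N + 1)) := by rw [hD, mul_pow, mul_pow, mul_pow]; ring
    rw [h2]; exact dvd_add this (dvd_mul_right _ _)
  have h2 : (X - C q) ^ (N + 1) ∣ D - Q := by
    have := UU_dvd N hqr hpq.symm Q
    have h2 : D - Q = (UU N q r p Q * ((X - C r) * (X - C p)) ^ (N + 1) - Q) +
      (X - C q) ^ (N + 1) * (UU N p q r Q * (X - C r) ^ (N + 1) +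
        UU N r p q Q * (X - C p) ^ (N + 1)) := by rw [hD, mul_pow, mul_pow, mul_pow]; ring
    rw [h2]; exact dvd_add this (dvd_mul_right _ _)
  have h3 : (X - C r) ^ (N + 1) ∣ D - Q := by
    have := UU_dvd N hpr.symm hqr.symm Q
    have h2 : D - Q = (UU N r p q Q * ((X - C p) * (X - C q)) ^ (N + 1) - Q) +
      (X - C r) ^ (N + 1) * (UU N p q r Q * (X - C q) ^ (N + 1) +
        UU N q r p Q * (X - C p) ^ (N + 1)) := by rw [hD, mul_pow, mul_pow, mul_pow]; ring
    rw [h2]; exact dvd_add this (dvd_mul_right _ _)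
  have h4 := ((cop (N + 1) (N + 1) hpr).mul_left (cop (N + 1) (N + 1) hqr)).mul_dvd
    ((cop (N + 1) (N + 1) hpq).mul_dvd h1 h2) h3
  have hdeg : ∀ a b c : K, natDegree (UU N a b c Q * ((X - C b) * (X - C c)) ^ (N + 1)) ≤
      3 * N + 2 := fun a b c => by
    refine natDegree_mul_le.trans ?_
    rw [natDegBase]
    have := UU_natDegree N a b c Q
    omega
  have h5 : natDegree (D - Q) ≤ 3 * N + 2 := by
    refine (natDegree_sub_le _ _).trans (max_le ?_ (by omega))
    refine natDegree_add_le_of_degree_le (natDegree_add_le_of_degree_le ?_ ?_) ?_ <;> apply hdeg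
  have h6 : D - Q = 0 := by
    by_contra h
    have h7 := natDegree_le_of_dvd h4 h
    rw [← mul_pow, ((monicBase (N + 1) p q).natDegree_mul ((monic_X_sub_C r).pow _)),
      natDegBase, natDegree_pow, natDegree_X_sub_C] at h7
    omega
  exact sub_eq_zero.1 h6

theorem Res_sum {K : Type*} [Field K] (N : ℕ) {p q r : K} (hpq : p ≠ q) (hpr : p ≠ r) (hqr : q ≠ r)
    (Q : K[X]) (hQ : Q.natDegree ≤ 1) :
    Res N p q r Q + Res N q r p Q + Res N r p q Q = 0 := by
  have h := congrArg (fun P => coeff P (N + 2 * (N + 1))) (pf N hpq hpr hqr Q hQ)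
  have hc : ∀ a b c : K, coeff (UU N a b c Q * ((X - C b) * (X - C c)) ^ (N + 1))
      (N + 2 * (N + 1)) = Res N a b c Q := fun a b c => by
    rw [coeff_mul_add_eq_of_natDegree_le (UU_natDegree N a b c Q) (natDegBase _ _ _).le, UU_coeff]
    have : coeff (((X - C b) * (X - C c)) ^ (N + 1)) (2 * (N + 1)) = 1 := by
      have := (monicBase (N + 1) b c).coeff_natDegree
      rwa [natDegBase] at this
    rw [this, mul_one]
  simp only [coeff_add, hc] at h
  rw [h]
  exact coeff_eq_zero_of_natDegree_lt (by omega)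

/-- Termwise antiderivative. -/
theorem antider {K : Type*} [Field K] [CharZero K] (N : ℕ) (p : K) (U : K[X]) (hU : U.degree < N) :
    ∃ J : K[X], J.degree < N ∧ (X - C p) * derivative J - C (N : K) * J = U := by
  have key : ∀ U : K[X], U.degree < N → ∃ J : K[X], J.degree < N ∧
      X * derivative J - C (N : K) * J = U := by
    intro U hU
    refine ⟨∑ k ∈ Finset.range N, C (U.coeff k / ((k : K) - N)) * X ^ k, ?_, ?_⟩
    · rw [degree_lt_iff_coeff_zero]
      intro m hm
      rw [finsetSum_coeff]
      refine Finset.sum_eq_zero fun k hk => ?_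
      rw [coeff_C_mul_X_pow, if_neg]
      have := Finset.mem_range.1 hk
      omega
    · have hU' : U = ∑ k ∈ Finset.range N, C (U.coeff k) * X ^ k := by
        ext m
        rw [finsetSum_coeff]
        simp only [coeff_C_mul_X_pow]
        rw [Finset.sum_ite_eq]
        split_ifs with hm
        · rfl
        · exact (degree_lt_iff_coeff_zero _ _).1 hU m (by simpa using hm)
      nth_rw 3 [hU']
      rw [derivative_sum, Finset.mul_sum, Finset.mul_sum, ← Finset.sum_sub_distrib]
      refine Finset.sum_congr rfl fun k hk => ?_
      have hne : (k : K) - N ≠ 0 := by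
        rw [sub_ne_zero]
        have := Finset.mem_range.1 hk
        exact_mod_cast this.ne
      have : C (U.coeff k) = C (U.coeff k / ((k : K) - N)) * (C (k : K) - C (N : K)) := by
        rw [← C_sub, ← C_mul, div_mul_cancel₀ _ hne]
      rw [this, derivative_C_mul, derivative_X_pow]
      rcases k with _ | k
      · simp; ring
      · rw [Nat.add_sub_cancel, pow_succ]
        ring
  obtain ⟨J, hJ, h⟩ := key (taylor p U) (by rwa [degree_taylor])
  refine ⟨taylor (-p) J, by rwa [degree_taylor], ?_⟩
  have h' := congrArg (taylor (-p)) h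
  rw [taylor_taylor, neg_add_cancel, taylor_zero, map_sub, taylor_mul, taylor_mul, taylor_X,
    taylor_C] at h'
  have hd : derivative (taylor (-p) J) = taylor (-p) (derivative J) := by
    simp [taylor_apply, derivative_comp]
  rw [hd, ← h']
  simp [sub_eq_add_neg]

theorem Res_indep {K : Type*} [Field K] [CharZero K] (N : ℕ) {p q r : K}
    (hpq : p ≠ q) (hpr : p ≠ r) (hqr : q ≠ r) (Q : K[X]) (hQ : Q.natDegree ≤ 1)
    (h1 : Res N p q r Q = 0) (h2 : Res N q r p Q = 0) (h3 : Res N r p q Q = 0) : Q = 0 := by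
  obtain ⟨J1, d1, e1⟩ := antider N p _ (UU_degree_lt N h1)
  obtain ⟨J2, d2, e2⟩ := antider N q _ (UU_degree_lt N h2)
  obtain ⟨J3, d3, e3⟩ := antider N r _ (UU_degree_lt N h3)
  have hpf := pf N hpq hpr hqr Q hQ
  rw [← e1, ← e2, ← e3] at hpf
  set P : K[X] := (X - C p) * (X - C q) * (X - C r) with hP
  set E : K[X] := J1 * ((X - C q) * (X - C r)) ^ N + J2 * ((X - C r) * (X - C p)) ^ N +
    J3 * ((X - C p) * (X - C q)) ^ N with hE
  have hder : ∀ (J : K[X]) (a b c : K), derivative (J * ((X - C b) * (X - C c)) ^ N) *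
      ((X - C a) * (X - C b) * (X - C c)) - C (N : K) * (J * ((X - C b) * (X - C c)) ^ N) *
      derivative ((X - C a) * (X - C b) * (X - C c)) =
      ((X - C a) * derivative J - C (N : K) * J) * ((X - C b) * (X - C c)) ^ (N + 1) := by
    intro J a b c
    rcases N with _ | N
    · simp; ring
    · simp only [derivative_mul, derivative_pow, derivative_sub, derivative_X, derivative_C,
        Nat.add_sub_cancel]
      ring
  have hEQ : derivative E * P - C (N : K) * E * derivative P = Q := by
    rw [← hpf, ← hder, ← hder, ← hder]
    have hP2 : (X - C q) * (X - C r) * (X - C p) = P := by rw [hP]; ring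
    have hP3 : (X - C r) * (X - C p) * (X - C q) = P := by rw [hP]; ring
    rw [hP2, hP3, ← hP, hE]
    simp only [derivative_add]
    ring
  have hPm : P.Monic := ((monic_X_sub_C p).mul (monic_X_sub_C q)).mul (monic_X_sub_C r)
  have hPd : P.natDegree = 3 := by
    rw [hP, ((monic_X_sub_C p).mul (monic_X_sub_C q)).natDegree_mul (monic_X_sub_C r),
      (monic_X_sub_C p).natDegree_mul (monic_X_sub_C q)]
    simp
  by_cases hE0 : E = 0
  · rw [← hEQ, hE0]; simp
  exfalso
  have hN : 0 < N := by
    by_contra hN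
    have : N = 0 := by omega
    subst this
    have hz : ∀ J : K[X], J.degree < (0 : ℕ) → J = 0 := fun J hJ => by
      by_contra h
      rw [degree_eq_natDegree h] at hJ
      exact absurd (Nat.cast_lt.1 hJ) (by omega)
    apply hE0
    rw [hE, hz _ d1, hz _ d2, hz _ d3]; simp
  have hEd : E.natDegree < 3 * N := by
    have hz : ∀ (J : K[X]) (b c : K), J.degree < N →
        (J * ((X - C b) * (X - C c)) ^ N).natDegree ≤ 3 * N - 1 := fun J b c hJ => by
      by_cases h : J = 0
      · simp [h]
      rw [← natDegree_lt_iff_degree_lt h] at hJ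
      refine natDegree_mul_le.trans ?_
      rw [natDegBase]; omega
    have : E.natDegree ≤ 3 * N - 1 := natDegree_add_le_of_degree_le
      (natDegree_add_le_of_degree_le (hz _ _ _ d1) (hz _ _ _ d2)) (hz _ _ _ d3)
    omega
  have hc := congrArg (fun P => coeff P (E.natDegree + 2)) hEQ
  simp only [coeff_sub] at hc
  rw [coeff_eq_zero_of_natDegree_lt (p := Q) (by omega)] at hc
  have hc2 : coeff (C (N : K) * E * derivative P) (E.natDegree + 2) =
      N * E.leadingCoeff * 3 := by
    rw [coeff_mul_add_eq_of_natDegree_le (natDegree_C_mul_le _ _)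
      (by have := natDegree_derivative_le P; omega), coeff_C_mul, coeff_derivative]
    have : P.coeff (2 + 1) = 1 := by
      have := hPm.coeff_natDegree; rwa [hPd] at this
    rw [this, leadingCoeff]; norm_num
  have hc1 : coeff (derivative E * P) (E.natDegree + 2) = E.natDegree * E.leadingCoeff := by
    rcases Nat.eq_zero_or_pos E.natDegree with h0 | h0
    · rw [h0, natDegree_eq_zero.1 h0 |>.choose_spec.symm]; simp
    · obtain ⟨e, he⟩ : ∃ e, E.natDegree = e + 1 := ⟨E.natDegree - 1, by omega⟩
      rw [show E.natDegree + 2 = e + 3 by omega, coeff_mul_add_eq_of_natDegree_le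
        (by have := natDegree_derivative_le E; omega) hPd.le, coeff_derivative, leadingCoeff, he]
      have : P.coeff 3 = 1 := by
        have := hPm.coeff_natDegree; rwa [hPd] at this
      rw [this]; push_cast; ring
  rw [hc1, hc2] at hc
  have hl : E.leadingCoeff ≠ 0 := leadingCoeff_ne_zero.2 hE0
  have : ((E.natDegree : K) - 3 * N) * E.leadingCoeff = 0 := by rw [← hc]; ring
  rcases mul_eq_zero.1 this with h | h
  · have : (E.natDegree : K) = ((3 * N : ℕ) : K) := by push_cast; exact sub_eq_zero.1 h
    have := Nat.cast_injective this
    omega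
  · exact hl h

end MS

namespace MS
open Height Height.AdmissibleAbsValues Multiset in
theorem hfs {K : Type*} [Field K] [AdmissibleAbsValues K] {ι : Type*} [Finite ι] {x : ι → K}
    (hx : x ≠ 0) :
    (fun v : nonarchAbsVal (K := K) ↦ ⨆ i, v.val (x i)).HasFiniteMulSupport := by
  have : Nonempty {j // x j ≠ 0} := nonempty_subtype.mpr <| Function.ne_iff.mp hx
  suffices (fun v : nonarchAbsVal (K := K) ↦
      ⨆ i : {j // x j ≠ 0}, v.val (x i)).HasFiniteMulSupport by
    convert! this with v
    obtain ⟨i, hi⟩ : ∃ j, x j ≠ 0 := Function.ne_iff.mp hx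
    have : Nonempty ι := .intro i
    refine le_antisymm (ciSup_le fun j ↦ ?_) (ciSup_le fun ⟨j, hj⟩ ↦ Finite.le_ciSup_of_le j le_rfl)
    rcases eq_or_ne (x j) 0 with h | h
    · rw [h, v.val.map_zero]
      exact Real.iSup_nonneg' ⟨⟨i, hi⟩, v.val.nonneg ..⟩
    · exact Finite.le_ciSup_of_le ⟨j, h⟩ le_rfl
  fun_prop (disch := grind)

open Height Height.AdmissibleAbsValues Multiset in
theorem height_cmp {K : Type*} [Field K] [AdmissibleAbsValues K] {ι : Type*} [Finite ι]
    {z t x : ι → K} (hz : z ≠ 0) (ht : t ≠ 0) (hx : x ≠ 0) (A : ℝ) (n : ℕ)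
    (h1 : ∀ v : AbsoluteValue K ℝ, ⨆ i, v (z i) ≤ A * (⨆ i, v (t i)) * (⨆ i, v (x i)) ^ n)
    (h2 : ∀ v : AbsoluteValue K ℝ, IsNonarchimedean v →
      ⨆ i, v (z i) ≤ (⨆ i, v (t i)) * (⨆ i, v (x i)) ^ n) :
    mulHeight z ≤ A ^ totalWeight K * mulHeight t * mulHeight x ^ n := by
  have e : A ^ totalWeight K * mulHeight t * mulHeight x ^ n =
      (A ^ totalWeight K * (archAbsVal.map fun v : AbsoluteValue K ℝ ↦ ⨆ i, v (t i)).prod *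
        ((archAbsVal.map fun v : AbsoluteValue K ℝ ↦ ⨆ i, v (x i)).prod) ^ n) *
      ((∏ᶠ v : nonarchAbsVal (K := K), ⨆ i, v.val (t i)) *
       (∏ᶠ v : nonarchAbsVal (K := K), ⨆ i, v.val (x i)) ^ n) := by
    rw [mulHeight_eq ht, mulHeight_eq hx, mul_pow]; ring
  rw [e, mulHeight_eq hz]
  have a1 : (archAbsVal.map fun v : AbsoluteValue K ℝ ↦ ⨆ i, v (z i)).prod ≤
    (A ^ totalWeight K * (archAbsVal.map fun v : AbsoluteValue K ℝ ↦ ⨆ i, v (t i)).prod *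
        ((archAbsVal.map fun v : AbsoluteValue K ℝ ↦ ⨆ i, v (x i)).prod) ^ n) := by
    rw [← Multiset.prod_map_pow, ← prod_replicate, totalWeight, ← map_const', ← prod_map_mul,
      ← prod_map_mul]
    exact prod_map_le_prod_map₀ _ _ (fun v _ ↦ Real.iSup_nonneg_of_nonnegHomClass v _) fun v _ ↦ h1 v
  have a2 : (∏ᶠ v : nonarchAbsVal (K := K), ⨆ i, v.val (z i)) ≤
     ((∏ᶠ v : nonarchAbsVal (K := K), ⨆ i, v.val (t i)) *
       (∏ᶠ v : nonarchAbsVal (K := K), ⨆ i, v.val (x i)) ^ n) := by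
    have hpow : (fun v : nonarchAbsVal (K := K) ↦ (⨆ i, v.val (x i)) ^ n).HasFiniteMulSupport := by
      refine (hfs hx).subset ?_
      intro v hv hv1
      apply hv
      simp only at hv1 ⊢
      rw [hv1, one_pow]
    rw [finprod_pow (hfs hx), ← finprod_mul_distrib (hfs ht) hpow]
    refine finprod_le_finprod (hfs hz) (fun v ↦ Real.iSup_nonneg_of_nonnegHomClass v.val _) ?_ ?_
    · refine ((hfs ht).union hpow).subset ?_
      exact Function.mulSupport_mul _ _
    · exact fun v => h2 v.val (isNonarchimedean _ v.2)
  refine mul_le_mul a1 a2 ?_ ?_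
  · exact finprod_nonneg fun v ↦ Real.iSup_nonneg_of_nonnegHomClass v.val _
  · exact le_trans (prod_map_nonneg fun v _ ↦ Real.iSup_nonneg_of_nonnegHomClass v _) a1
end MS

namespace MS
open Polynomial

noncomputable def EE {K : Type*} [Field K] (N k : ℕ) (d e : K) : K :=
  ∑ ij ∈ Finset.HasAntidiagonal.antidiagonal k, (-1) ^ k * (((N + ij.1).choose N : ℕ) : K) *
    (((N + ij.2).choose N : ℕ) : K) * (d ^ (N - ij.1) * e ^ (N - ij.2))

theorem coeff_EE {K : Type*} [Field K] (N k : ℕ) (hk : k ≤ N) {d e : K} (hd : d ≠ 0) (he : e ≠ 0) :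
    PowerSeries.coeff k (invS N d * invS N e) * (d * e) ^ (2 * N + 1) = EE N k d e := by
  rw [PowerSeries.coeff_mul, Finset.sum_mul, EE]
  refine Finset.sum_congr rfl fun ij hij => ?_
  have h := Finset.HasAntidiagonal.mem_antidiagonal.1 hij
  rw [invS, invS, PowerSeries.coeff_mk, PowerSeries.coeff_mk, ← h, pow_add (-1 : K)]
  have aux : ∀ (d : K) (i : ℕ), d ≠ 0 → i ≤ N → d ^ (2 * N + 1) * d⁻¹ ^ (N + 1 + i) = d ^ (N - i) := by
    intro d i hd hi
    rw [show 2 * N + 1 = (N - i) + (N + 1 + i) by omega, pow_add, mul_assoc, ← mul_pow,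
      mul_inv_cancel₀ hd, one_pow, mul_one]
  rw [← aux d ij.1 hd (by omega), ← aux e ij.2 he (by omega), mul_pow]
  ring

noncomputable def WW {K : Type*} [Field K] (N : ℕ) (p q r : K) (Q : K[X]) : K :=
  Res N p q r Q * ((p - q) * (p - r)) ^ (2 * N + 1)

theorem WW_eq {K : Type*} [Field K] (M : ℕ) {p q r : K} (hpq : p ≠ q) (hpr : p ≠ r) (l : K) :
    WW (M + 1) p q r (X - C l) = EE (M + 1) M (p - q) (p - r) +
      (p - l) * EE (M + 1) (M + 1) (p - q) (p - r) := by
  rw [← coeff_EE _ _ (by omega) (sub_ne_zero.2 hpq) (sub_ne_zero.2 hpr),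
    ← coeff_EE _ _ (by omega) (sub_ne_zero.2 hpq) (sub_ne_zero.2 hpr), WW, Res, ser]
  have : ((taylor p (X - C l) : K[X]) : PowerSeries K) = PowerSeries.X + PowerSeries.C (p - l) := by
    simp; ring
  rw [this, add_mul, map_add, PowerSeries.coeff_succ_X_mul, PowerSeries.coeff_C_mul]
  ring

theorem term_le {K : Type*} [Field K] (v : AbsoluteValue K ℝ) (N k : ℕ) (hk : k ≤ N) {d e : K}
    {m : ℝ} (hd : v d ≤ m) (he : v e ≤ m) (ij : ℕ × ℕ) (h : ij.1 + ij.2 = k) :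
    v (d ^ (N - ij.1) * e ^ (N - ij.2)) ≤ m ^ (2 * N - k) := by
  rw [show 2 * N - k = (N - ij.1) + (N - ij.2) by omega, pow_add, map_mul, map_pow, map_pow]
  have := v.nonneg d
  have := v.nonneg e
  have hm : 0 ≤ m := this.trans he
  gcongr

theorem na_sum_le {K : Type*} [Field K] (v : AbsoluteValue K ℝ) (hv : IsNonarchimedean v)
    {ι : Type*} (s : Finset ι) (f : ι → K) {B : ℝ} (hB : 0 ≤ B) (h : ∀ i ∈ s, v (f i) ≤ B) :
    v (∑ i ∈ s, f i) ≤ B := by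
  classical
  induction s using Finset.induction_on with
  | empty => simpa using hB
  | insert a s ha ih =>
    rw [Finset.sum_insert ha]
    refine (hv _ _).trans (max_le (h _ (Finset.mem_insert_self _ _)) (ih fun i hi => ?_))
    exact h i (Finset.mem_insert_of_mem hi)

theorem natCast_le {K : Type*} [Field K] (v : AbsoluteValue K ℝ) (n : ℕ) : v (n : K) ≤ n := by
  induction n with
  | zero => simp
  | succ n ih =>
    push_cast
    calc _ ≤ v (n : K) + v 1 := v.add_le _ _
      _ ≤ _ := by rw [map_one]; linarith

theorem EE_le {K : Type*} [Field K] (v : AbsoluteValue K ℝ) (N k : ℕ) (hk : k ≤ N) {d e : K}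
    {m : ℝ} (hd : v d ≤ m) (he : v e ≤ m) : v (EE N k d e) ≤ 16 ^ N * m ^ (2 * N - k) := by
  have hm : 0 ≤ m := (v.nonneg d).trans hd
  have : ∀ ij ∈ Finset.HasAntidiagonal.antidiagonal k, v ((-1) ^ k * (((N + ij.1).choose N : ℕ) : K) *
    (((N + ij.2).choose N : ℕ) : K) * (d ^ (N - ij.1) * e ^ (N - ij.2))) ≤
      2 ^ (2 * N + k) * m ^ (2 * N - k) := by
    intro ij hij
    have h := Finset.HasAntidiagonal.mem_antidiagonal.1 hij
    rw [map_mul, map_mul, map_mul, map_pow, map_neg_eq_map, map_one, one_pow, one_mul]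
    have hb : ∀ i, v (((N + i).choose N : ℕ) : K) ≤ 2 ^ (N + i) := fun i =>
      (natCast_le v _).trans (by exact_mod_cast Nat.choose_le_two_pow _ _)
    have h2 : (2 : ℝ) ^ (2 * N + k) = 2 ^ (N + ij.1) * 2 ^ (N + ij.2) := by
      rw [← pow_add]; congr 1; omega
    rw [h2]
    refine mul_le_mul (mul_le_mul (hb _) (hb _) (v.nonneg _) (by positivity))
      (term_le v N k hk hd he ij h) (v.nonneg _) (by positivity)
  calc v (EE N k d e) ≤ _ := v.sum_le _ _
    _ ≤ _ := Finset.sum_le_card_nsmul _ _ _ this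
    _ = (k + 1 : ℕ) * (2 ^ (2 * N + k) * m ^ (2 * N - k)) := by
      rw [nsmul_eq_mul, Finset.Nat.card_antidiagonal]
    _ ≤ 2 ^ k * (2 ^ (2 * N + k) * m ^ (2 * N - k)) := by
      gcongr
      exact_mod_cast Nat.lt_two_pow_self
    _ = 2 ^ (2 * N + 2 * k) * m ^ (2 * N - k) := by rw [← mul_assoc, ← pow_add]; congr 2; ring
    _ ≤ 2 ^ (4 * N) * m ^ (2 * N - k) := by gcongr <;> first | omega | norm_num
    _ = _ := by rw [pow_mul]; norm_num

theorem EE_le_na {K : Type*} [Field K] (v : AbsoluteValue K ℝ) (hv : IsNonarchimedean v)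
    (N k : ℕ) (hk : k ≤ N) {d e : K}
    {m : ℝ} (hd : v d ≤ m) (he : v e ≤ m) : v (EE N k d e) ≤ m ^ (2 * N - k) := by
  have hm : 0 ≤ m := (v.nonneg d).trans hd
  have : ∀ ij ∈ Finset.HasAntidiagonal.antidiagonal k, v ((-1) ^ k * (((N + ij.1).choose N : ℕ) : K) *
    (((N + ij.2).choose N : ℕ) : K) * (d ^ (N - ij.1) * e ^ (N - ij.2))) ≤ m ^ (2 * N - k) := by
    intro ij hij
    have h := Finset.HasAntidiagonal.mem_antidiagonal.1 hij
    rw [map_mul, map_mul, map_mul, map_pow, map_neg_eq_map, map_one, one_pow, one_mul]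
    have hb : ∀ n : ℕ, v (n : K) ≤ 1 := fun i => hv.apply_natCast_le_one
    calc _ ≤ 1 * 1 * m ^ (2 * N - k) := mul_le_mul (mul_le_mul (hb _) (hb _) (v.nonneg _) (by positivity))
            (term_le v N k hk hd he ij h) (v.nonneg _) (by positivity)
      _ = _ := by ring
  rw [EE]
  exact na_sum_le v hv _ _ (by positivity) this

theorem WW_le {K : Type*} [Field K] (v : AbsoluteValue K ℝ) (M : ℕ) {p q r l : K}
    (hpq : p ≠ q) (hpr : p ≠ r) {m : ℝ} (h1 : v (p - q) ≤ m) (h2 : v (p - r) ≤ m)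
    (h3 : v (p - l) ≤ m) :
    v (WW (M + 1) p q r (X - C l)) ≤ 2 * 16 ^ (M + 1) * m ^ (M + 2) := by
  have hm : 0 ≤ m := (v.nonneg _).trans h1
  rw [WW_eq M hpq hpr]
  refine (v.add_le _ _).trans ?_
  have a := EE_le v (M + 1) M (by omega) h1 h2
  have b := EE_le v (M + 1) (M + 1) (by omega) h1 h2
  rw [show 2 * (M + 1) - M = M + 2 by omega] at a
  rw [show 2 * (M + 1) - (M + 1) = M + 1 by omega] at b
  rw [map_mul]
  have c : v (p - l) * v (EE (M + 1) (M + 1) (p - q) (p - r)) ≤ m * (16 ^ (M + 1) * m ^ (M + 1)) :=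
    mul_le_mul h3 b (v.nonneg _) hm
  calc _ ≤ 16 ^ (M + 1) * m ^ (M + 2) + m * (16 ^ (M + 1) * m ^ (M + 1)) := add_le_add a c
    _ = _ := by ring

theorem WW_le_na {K : Type*} [Field K] (v : AbsoluteValue K ℝ) (hv : IsNonarchimedean v) (M : ℕ)
    {p q r l : K}
    (hpq : p ≠ q) (hpr : p ≠ r) {m : ℝ} (h1 : v (p - q) ≤ m) (h2 : v (p - r) ≤ m)
    (h3 : v (p - l) ≤ m) :
    v (WW (M + 1) p q r (X - C l)) ≤ m ^ (M + 2) := by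
  have hm : 0 ≤ m := (v.nonneg _).trans h1
  rw [WW_eq M hpq hpr]
  refine (hv _ _).trans ?_
  have a := EE_le_na v hv (M + 1) M (by omega) h1 h2
  have b := EE_le_na v hv (M + 1) (M + 1) (by omega) h1 h2
  rw [show 2 * (M + 1) - M = M + 2 by omega] at a
  rw [show 2 * (M + 1) - (M + 1) = M + 1 by omega] at b
  rw [map_mul]
  have c : v (p - l) * v (EE (M + 1) (M + 1) (p - q) (p - r)) ≤ m * m ^ (M + 1) :=
    mul_le_mul h3 b (v.nonneg _) hm
  refine max_le a (c.trans (le_of_eq (by ring)))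

end MS

namespace MS
open Polynomial

/-- cross product -/
def cr {K : Type*} [Field K] (t w : Fin 3 → K) : Fin 3 → K :=
  ![t 1 * w 2 - t 2 * w 1, t 2 * w 0 - t 0 * w 2, t 0 * w 1 - t 1 * w 0]

noncomputable def wv {K : Type*} [Field K] (N : ℕ) (p q r : K) (Q : K[X]) : Fin 3 → K :=
  ![WW N p q r Q, WW N q r p Q, WW N r p q Q]

theorem wv_orth {K : Type*} [Field K] (N : ℕ) {p q r : K} (hpq : p ≠ q) (hpr : p ≠ r)
    (hqr : q ≠ r) (Q : K[X]) (hQ : Q.natDegree ≤ 1) :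
    WW N p q r Q * (q - r) ^ (2 * N + 1) + WW N q r p Q * (r - p) ^ (2 * N + 1)
      + WW N r p q Q * (p - q) ^ (2 * N + 1) = 0 := by
  have h := Res_sum N hpq hpr hqr Q hQ
  unfold WW
  rw [mul_assoc, mul_assoc, mul_assoc, ← mul_pow, ← mul_pow, ← mul_pow]
  rw [show (q - r) * (q - p) * (r - p) = (p - q) * (p - r) * (q - r) by ring,
    show (r - p) * (r - q) * (p - q) = (p - q) * (p - r) * (q - r) by ring, ← add_mul, ← add_mul, h,
    zero_mul]

theorem exists_cr_ne {K : Type*} [Field K] [CharZero K] (N : ℕ) {p q r : K} (hpq : p ≠ q)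
    (hpr : p ≠ r) (hqr : q ≠ r) (t : Fin 3 → K) (ht : ∀ i, t i ≠ 0) :
    ∃ l, (l = p ∨ l = q) ∧ cr t (wv N p q r (X - C l)) ≠ 0 := by
  by_contra! hcon
  have h1 := hcon p (Or.inl rfl)
  have h2 := hcon q (Or.inr rfl)
  have hW : ∀ Q : K[X], cr t (wv N p q r Q) = 0 → ∃ a, WW N p q r Q = a * t 0 ∧
      WW N q r p Q = a * t 1 ∧ WW N r p q Q = a * t 2 := by
    intro Q h
    have e1 := congrFun h 1
    have e2 := congrFun h 2
    simp [cr, wv] at e1 e2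
    have := ht 0
    refine ⟨WW N p q r Q / t 0, by field_simp, ?_, ?_⟩
    · field_simp; linear_combination e2
    · field_simp; linear_combination -e1
  obtain ⟨a, a0, a1, a2⟩ := hW _ h1
  obtain ⟨b, b0, b1, b2⟩ := hW _ h2
  have hdpq := sub_ne_zero.2 hpq
  have hdpr := sub_ne_zero.2 hpr
  have hdqr := sub_ne_zero.2 hqr
  have hdqp := sub_ne_zero.2 hpq.symm
  have hdrp := sub_ne_zero.2 hpr.symm
  have hdrq := sub_ne_zero.2 hqr.symm
  have lin : ∀ (p q r : K), p - q ≠ 0 → p - r ≠ 0 → ∀ (α β s : K) (Q R : K[X]),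
      WW N p q r Q = α * s → WW N p q r R = β * s →
      Res N p q r (C β * Q + C (-α) * R) = 0 := by
    intro p q r h1 h2 α β s Q R e1 e2
    rw [Res_lin]
    have : ((p - q) * (p - r)) ^ (2 * N + 1) ≠ 0 := pow_ne_zero _ (mul_ne_zero h1 h2)
    apply mul_right_cancel₀ this
    unfold WW at e1 e2
    linear_combination β * e1 - α * e2
  have hdeg : ∀ a b c d : K, (C a * (X - C b) + C c * (X - C d)).natDegree ≤ 1 := by
    intro a b c d; compute_degree
  have z1 := Res_indep N hpq hpr hqr _ (hdeg b p (-a) q)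
    (lin p q r hdpq hdpr a b _ _ _ a0 b0) (lin q r p hdqr hdqp a b _ _ _ a1 b1)
    (lin r p q hdrp hdrq a b _ _ _ a2 b2)
  have c1 := congrArg (fun P => P.eval p) z1
  have c2 := congrArg (fun P => P.eval q) z1
  simp [hdpq, hdqp] at c1 c2
  subst c1 c2
  have z2 := Res_indep N hpq hpr hqr _ (hdeg 1 p (-0) q)
    (lin p q r hdpq hdpr 0 1 _ _ (X - C q : K[X]) (by simpa using a0) (one_mul _).symm)
    (lin q r p hdqr hdqp 0 1 _ _ (X - C q : K[X]) (by simpa using a1) (one_mul _).symm)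
    (lin r p q hdrp hdrq 0 1 _ _ (X - C q : K[X]) (by simpa using a2) (one_mul _).symm)
  have c3 := congrArg (fun P => P.eval q) z2
  simp [hdqp] at c3

theorem cr_le {K : Type*} [Field K] (v : AbsoluteValue K ℝ) (t w : Fin 3 → K) {T B : ℝ}
    (hT : ∀ i, v (t i) ≤ T) (hB : ∀ i, v (w i) ≤ B) (i : Fin 3) : v (cr t w i) ≤ 2 * (T * B) := by
  have hT0 : 0 ≤ T := (v.nonneg _).trans (hT 0)
  have key : ∀ i j k l, v (t i * w j - t k * w l) ≤ 2 * (T * B) := by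
    intro i j k l
    have := v.add_le (t i * w j) (-(t k * w l))
    rw [map_neg_eq_map, ← sub_eq_add_neg, map_mul, map_mul] at this
    have a := mul_le_mul (hT i) (hB j) (v.nonneg _) hT0
    have b := mul_le_mul (hT k) (hB l) (v.nonneg _) hT0
    linarith
  fin_cases i <;> exact key _ _ _ _

theorem cr_le_na {K : Type*} [Field K] (v : AbsoluteValue K ℝ) (hv : IsNonarchimedean v)
    (t w : Fin 3 → K) {T B : ℝ}
    (hT : ∀ i, v (t i) ≤ T) (hB : ∀ i, v (w i) ≤ B) (i : Fin 3) : v (cr t w i) ≤ T * B := by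
  have hT0 : 0 ≤ T := (v.nonneg _).trans (hT 0)
  have key : ∀ i j k l, v (t i * w j - t k * w l) ≤ T * B := by
    intro i j k l
    have := hv (t i * w j) (-(t k * w l))
    rw [map_neg_eq_map, ← sub_eq_add_neg, map_mul, map_mul] at this
    have a := mul_le_mul (hT i) (hB j) (v.nonneg _) hT0
    have b := mul_le_mul (hT k) (hB l) (v.nonneg _) hT0
    exact this.trans (max_le a b)
  fin_cases i <;> exact key _ _ _ _

set_option maxHeartbeats 1000000 in
open Height in
theorem key_ineq {K : Type*} [Field K] [CharZero K] [AdmissibleAbsValues K] (M : ℕ)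
    (x y : Fin 3 → K) (hx : ∀ i, x i ≠ 0) (hy : ∀ i, y i ≠ 0)
    (sx : x 0 + x 1 + x 2 = 0) (sy : y 0 + y 1 + y 2 = 0) :
    mulHeight x ^ (2 * (M + 1) + 1) ≤ ((16 : ℝ) ^ (M + 2)) ^ totalWeight K *
      mulHeight (fun i => y i / x i ^ (2 * (M + 1) + 1)) * mulHeight x ^ (M + 2) := by
  set n := 2 * (M + 1) + 1 with hn
  set t : Fin 3 → K := fun i => y i / x i ^ n with ht
  obtain ⟨p, hp⟩ : ∃ p, p = - x 1 := ⟨_, rfl⟩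
  obtain ⟨q, hq⟩ : ∃ q, q = x 0 := ⟨_, rfl⟩
  have e2 : p - q = x 2 := by rw [hp, hq]; linear_combination -sx
  have e0 : q - 0 = x 0 := by rw [hq, sub_zero]
  have e1 : 0 - p = x 1 := by rw [hp]; ring
  have hpq : p ≠ q := sub_ne_zero.1 (e2 ▸ hx 2)
  have hqr : q ≠ 0 := sub_ne_zero.1 (e0 ▸ hx 0)
  have hpr : p ≠ 0 := (sub_ne_zero.1 (e1 ▸ hx 1)).symm
  have ht0 : ∀ i, t i ≠ 0 := fun i => div_ne_zero (hy i) (pow_ne_zero _ (hx i))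
  obtain ⟨l, hl, hz⟩ := exists_cr_ne (M + 1) hpq hpr hqr t ht0
  set w := wv (M + 1) p q 0 (X - C l) with hw
  have hdeg : (X - C l : K[X]).natDegree ≤ 1 := by compute_degree
  have o1 := wv_orth (M + 1) hpq hpr hqr _ hdeg
  rw [e0, e1, e2, ← hn] at o1
  have o1' : w 0 * x 0 ^ n + w 1 * x 1 ^ n + w 2 * x 2 ^ n = 0 := o1
  have tx : ∀ i, t i * x i ^ n = y i := fun i => div_mul_cancel₀ _ (pow_ne_zero _ (hx i))
  have o2 : t 0 * x 0 ^ n + t 1 * x 1 ^ n + t 2 * x 2 ^ n = 0 := by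
    rw [tx, tx, tx, sy]
  have hpar : ∀ j, cr t w j * x 0 ^ n = cr t w 0 * x j ^ n := by
    intro j
    fin_cases j
    · rfl
    · simp [cr]; linear_combination t 2 * o1' - w 2 * o2
    · simp [cr]; linear_combination w 1 * o2 - t 1 * o1'
  have hc0 : cr t w 0 ≠ 0 := by
    intro h0
    apply hz
    ext j
    have := hpar j
    rw [h0, zero_mul] at this
    exact (mul_eq_zero.1 this).resolve_right (pow_ne_zero _ (hx 0))
  have hzx : cr t w = (cr t w 0 / x 0 ^ n) • (x ^ n) := by
    ext j
    have := hpar j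
    have h0 := pow_ne_zero n (hx 0)
    simp only [Pi.smul_apply, Pi.pow_apply, smul_eq_mul]
    rw [div_mul_eq_mul_div, ← this, mul_div_assoc, div_self h0, mul_one]
  have hH : mulHeight (cr t w) = mulHeight x ^ n := by
    rw [hzx, mulHeight_smul_eq_mulHeight _ (div_ne_zero hc0 (pow_ne_zero _ (hx 0))), mulHeight_pow]
  rw [← hH]
  have hx' : x ≠ 0 := fun h => hx 0 (congrFun h 0)
  have ht' : t ≠ 0 := fun h => ht0 0 (congrFun h 0)
  have loc : ∀ v : AbsoluteValue K ℝ, ∀ i, v (x i) ≤ ⨆ i, v (x i) := fun v i =>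
    Finite.le_ciSup_of_le i le_rfl
  have loct : ∀ v : AbsoluteValue K ℝ, ∀ i, v (t i) ≤ ⨆ i, v (t i) := fun v i =>
    Finite.le_ciSup_of_le i le_rfl
  have dd : ∀ v : AbsoluteValue K ℝ, ∀ a b, (a = p ∨ a = q ∨ a = 0) → (b = p ∨ b = q ∨ b = 0) →
      v (a - b) ≤ ⨆ i, v (x i) := by
    intro v a b ha hb
    have h0 : v (a - a) ≤ ⨆ i, v (x i) := by
      rw [sub_self, map_zero]; exact (v.nonneg _).trans (loc v 0)
    have k2 : v (p - q) ≤ ⨆ i, v (x i) := e2 ▸ loc v 2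
    have k0 : v (q - 0) ≤ ⨆ i, v (x i) := e0 ▸ loc v 0
    have k1 : v (0 - p) ≤ ⨆ i, v (x i) := e1 ▸ loc v 1
    rcases ha with rfl | rfl | rfl <;> rcases hb with rfl | rfl | rfl <;>
      first | assumption | (rw [v.map_sub]; assumption)
  have hl' : l = p ∨ l = q ∨ l = 0 := by tauto
  have P : p = p ∨ p = q ∨ p = 0 := Or.inl rfl
  have Q : q = p ∨ q = q ∨ q = 0 := Or.inr (Or.inl rfl)
  have R : (0 : K) = p ∨ 0 = q ∨ (0 : K) = 0 := Or.inr (Or.inr rfl)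
  have dpq := fun v => dd v _ _ P Q
  have dpr := fun v => dd v _ _ P R
  have dqp := fun v => dd v _ _ Q P
  have dqr := fun v => dd v _ _ Q R
  have drp := fun v => dd v _ _ R P
  have drq := fun v => dd v _ _ R Q
  have dp := fun v => dd v _ _ P hl'
  have dq := fun v => dd v _ _ Q hl'
  have dr := fun v => dd v _ _ R hl'
  refine height_cmp hz ht' hx' _ _ (fun v => ?_) (fun v hv => ?_)
  · refine ciSup_le fun i => ?_
    have hw' : ∀ i, v (w i) ≤ 2 * 16 ^ (M + 1) * (⨆ i, v (x i)) ^ (M + 2) := by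
      intro i
      fin_cases i
      · exact WW_le v M hpq hpr (dpq v) (dpr v) (dp v)
      · exact WW_le v M hqr hpq.symm (dqr v) (dqp v) (dq v)
      · exact WW_le v M hpr.symm hqr.symm (drp v) (drq v) (dr v)
    refine (cr_le v t w (loct v) hw' i).trans ?_
    have h0 : 0 ≤ ⨆ i, v (x i) := (v.nonneg _).trans (loc v 0)
    have h1 : 0 ≤ ⨆ i, v (t i) := (v.nonneg _).trans (loct v 0)
    have h2 : 0 ≤ 16 ^ (M + 1) * (⨆ i, v (t i)) * (⨆ i, v (x i)) ^ (M + 2) := by positivity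
    rw [pow_succ (16 : ℝ) (M + 1)]
    nlinarith
  · refine ciSup_le fun i => ?_
    have hw' : ∀ i, v (w i) ≤ (⨆ i, v (x i)) ^ (M + 2) := by
      intro i
      fin_cases i
      · exact WW_le_na v hv M hpq hpr (dpq v) (dpr v) (dp v)
      · exact WW_le_na v hv M hqr hpq.symm (dqr v) (dqp v) (dq v)
      · exact WW_le_na v hv M hpr.symm hqr.symm (drp v) (drq v) (dr v)
    exact cr_le_na v hv t w (loct v) hw' i
end MS

namespace MS
section ell
variable {K : Type*} [Field K] [NumberField K]

/-- normalised logarithmic absolute values -/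
noncomputable def ell (T : Finset (FinitePlace K)) : (InfinitePlace K ⊕ T) → K → ℝ
  | Sum.inl v, a => v.mult * Real.log (v a)
  | Sum.inr w, a => Real.log (w.1 a)

theorem ell_mul (T : Finset (FinitePlace K)) (s) {a b : K} (ha : a ≠ 0) (hb : b ≠ 0) :
    ell T s (a * b) = ell T s a + ell T s b := by
  rcases s with v | w
  · simp only [ell]
    rw [map_mul, Real.log_mul (by simpa using ha) (by simpa using hb)]; ring
  · simp only [ell]
    rw [map_mul, Real.log_mul (by simpa using ha) (by simpa using hb)]

theorem ell_pow (T : Finset (FinitePlace K)) (s) (a : K) (n : ℕ) :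
    ell T s (a ^ n) = n * ell T s a := by
  rcases s with v | w
  · simp only [ell]
    rw [map_pow, Real.log_pow]; ring
  · simp only [ell]
    rw [map_pow, Real.log_pow]

theorem ell_neg_one (T : Finset (FinitePlace K)) (s) : ell T s (-1 : K) = 0 := by
  have h : ell T s ((-1 : K) * (-1)) = 0 := by
    rw [neg_mul_neg, one_mul]; rcases s with v | w <;> simp [ell]
  rw [ell_mul T s (by simp) (by simp)] at h
  linarith

theorem ell_div (T : Finset (FinitePlace K)) (s) {a b : K} (ha : a ≠ 0) (hb : b ≠ 0) :
    ell T s (a / b) = ell T s a - ell T s b := by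
  have := ell_mul T s (div_ne_zero ha hb) hb
  rw [div_mul_cancel₀ _ hb] at this
  linarith

theorem mul_log_sup (c : ℝ) (hc : 0 ≤ c) (g : Fin 3 → ℝ) (hg : ∀ i, 0 < g i) :
    c * Real.log (⨆ i, g i) = ⨆ i, c * Real.log (g i) := by
  apply le_antisymm
  · obtain ⟨i, hi⟩ := exists_eq_ciSup_of_finite (f := g)
    rw [← hi]
    exact Finite.le_ciSup_of_le i le_rfl
  · refine ciSup_le fun i => ?_
    have : g i ≤ ⨆ i, g i := Finite.le_ciSup_of_le i le_rfl
    exact mul_le_mul_of_nonneg_left (Real.log_le_log (hg i) this) hc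

open Height in
theorem logHeight_ell (T : Finset (FinitePlace K)) (x : Fin 3 → K) (hx : ∀ i, x i ≠ 0)
    (hT : ∀ w ∉ T, ∀ i, w (x i) = 1) : logHeight x = ∑ s, ⨆ i, ell T s (x i) := by
  have hx' : x ≠ 0 := fun h => hx 0 (congrFun h 0)
  have hpos : ∀ v : InfinitePlace K, ∀ i, 0 < v (x i) := fun v i => InfinitePlace.pos_iff.2 (hx i)
  have hpos' : ∀ v : FinitePlace K, ∀ i, 0 < v (x i) := fun v i => FinitePlace.pos_iff.2 (hx i)
  have sp : ∀ g : Fin 3 → ℝ, (∀ i, 0 < g i) → 0 < ⨆ i, g i := fun g hg =>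
    (hg 0).trans_le (Finite.le_ciSup_of_le 0 le_rfl)
  rw [logHeight_eq_log_mulHeight, NumberField.mulHeight_eq hx', Fintype.sum_sum_type,
    finprod_eq_prod_of_mulSupport_subset (s := T)]
  · rw [Real.log_mul, Real.log_prod, Real.log_prod]
    · congr 1
      · refine Finset.sum_congr rfl fun v _ => ?_
        rw [Real.log_pow, mul_log_sup _ (by positivity) _ (hpos v)]
        rfl
      · rw [← Finset.sum_coe_sort]
        refine Finset.sum_congr rfl fun w _ => ?_
        have := mul_log_sup 1 (by positivity) _ (hpos' w.1)
        simp only [one_mul] at this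
        rw [this]
        rfl
    · exact fun w _ => (sp _ (hpos' w)).ne'
    · exact fun w _ => (pow_pos (sp _ (hpos w)) _).ne'
    · exact (Finset.prod_pos fun w _ => (pow_pos (sp _ (hpos w)) _)).ne'
    · exact (Finset.prod_pos fun w _ => (sp _ (hpos' w))).ne'
  · intro w hw
    by_contra hwT
    apply hw
    have : ∀ i, w (x i) = 1 := hT w (by simpa using hwT)
    simp [this]

theorem sum_ell (T : Finset (FinitePlace K)) (a : K) (ha : a ≠ 0)
    (hT : ∀ w ∉ T, w a = 1) : ∑ s, ell T s a = 0 := by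
  have h := congrArg Real.log (prod_abs_eq_one ha)
  have hpos : ∀ v : InfinitePlace K, 0 < v a := fun v => InfinitePlace.pos_iff.2 ha
  have hpos' : ∀ v : FinitePlace K, 0 < v a := fun v => FinitePlace.pos_iff.2 ha
  rw [finprod_eq_prod_of_mulSupport_subset (s := T), Real.log_mul, Real.log_prod, Real.log_prod,
    Real.log_one] at h
  · rw [Fintype.sum_sum_type, ← h]
    congr 1
    · refine Finset.sum_congr rfl fun v _ => ?_
      rw [Real.log_pow]; rfl
    · exact Finset.sum_coe_sort T (fun w => Real.log (w a))
  · exact fun w _ => (hpos' w).ne'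
  · exact fun w _ => (pow_pos (hpos w) _).ne'
  · exact (Finset.prod_pos fun w _ => (pow_pos (hpos w) _)).ne'
  · exact (Finset.prod_pos fun w _ => (hpos' w)).ne'
  · intro w hw
    by_contra hwT
    exact hw (hT w (by simpa using hwT))

open Height in
theorem abs_ell_le (T : Finset (FinitePlace K)) (x : Fin 3 → K) (hx : ∀ i, x i ≠ 0)
    (hT : ∀ w ∉ T, ∀ i, w (x i) = 1) (h2 : x 2 = -1) (s) (i : Fin 3) :
    |ell T s (x i)| ≤ logHeight x := by
  classical
  rw [logHeight_ell T x hx hT]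
  have le : ∀ s i, ell T s (x i) ≤ ⨆ i, ell T s (x i) := fun s i => Finite.le_ciSup_of_le i le_rfl
  have nn : ∀ s, 0 ≤ ⨆ i, ell T s (x i) := fun s => by
    have := le s 2
    rwa [h2, ell_neg_one] at this
  rw [abs_le]
  constructor
  · have h0 := sum_ell T (x i) (hx i) (fun w hw => hT w hw i)
    rw [← Finset.add_sum_erase _ _ (Finset.mem_univ s)] at h0
    have h1 : ∑ s ∈ Finset.univ.erase s, ell T s (x i) ≤ ∑ s, ⨆ i, ell T s (x i) :=
      (Finset.sum_le_sum fun s _ => le s i).trans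
        (Finset.sum_le_sum_of_subset_of_nonneg (Finset.erase_subset _ _) fun s _ _ => nn s)
    linarith
  · exact (le s i).trans (Finset.single_le_sum (f := fun s => ⨆ i, ell T s (x i))
      (fun s _ => nn s) (Finset.mem_univ s))

open Height in
theorem logHeight_le (T : Finset (FinitePlace K)) (x : Fin 3 → K) (hx : ∀ i, x i ≠ 0)
    (hT : ∀ w ∉ T, ∀ i, w (x i) = 1) (B : ℝ) (hB : ∀ s i, ell T s (x i) ≤ B) :
    logHeight x ≤ Fintype.card (InfinitePlace K ⊕ T) * B := by
  rw [logHeight_ell T x hx hT, ← nsmul_eq_mul, ← Finset.card_univ]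
  exact Finset.sum_le_card_nsmul _ _ _ fun s _ => ciSup_le (hB s)
end ell
end MS

namespace MS
variable {K : Type*} [Field K] [NumberField K]

/-- solutions of the unit equation -/
def Sol (T : Finset (FinitePlace K)) : Set K :=
  {u | u ≠ 0 ∧ 1 - u ≠ 0 ∧ ∀ w ∉ T, w u = 1 ∧ w (1 - u) = 1}

def vec (u : K) : Fin 3 → K := ![u, 1 - u, -1]

theorem vec_ne {T : Finset (FinitePlace K)} {u : K} (hu : u ∈ Sol T) (i) : vec u i ≠ 0 := by
  fin_cases i
  · exact hu.1
  · exact hu.2.1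
  · simp [vec]

theorem vec_one {T : Finset (FinitePlace K)} {u : K} (hu : u ∈ Sol T) (w) (hw : w ∉ T) (i) :
    w (vec u i) = 1 := by
  fin_cases i
  · exact (hu.2.2 w hw).1
  · exact (hu.2.2 w hw).2
  · change w (-1) = 1
    rw [map_neg_eq_map, map_one]

open Height in
theorem northcott_vec (B : ℝ) : {u : K | logHeight (vec u) ≤ B}.Finite := by
  refine (NumberField.finite_setOfPred_logHeight₁_le K B).subset fun u hu => ?_
  have hu : logHeight (vec u) ≤ B := hu
  have h1 := logHeight₁_div_eq_logHeight u (-1)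
  have h2 := logHeight_comp_le (![0, 2] : Fin 2 → Fin 3) (vec u)
  have h3 : vec u ∘ (![0, 2] : Fin 2 → Fin 3) = ![u, -1] := by
    ext i; fin_cases i <;> simp [vec]
  rw [h3, ← h1, div_neg, div_one, logHeight₁_neg] at h2
  exact h2.trans hu

open Height in
theorem key_log (M : ℕ) (x y : Fin 3 → K) (hx : ∀ i, x i ≠ 0) (hy : ∀ i, y i ≠ 0)
    (sx : x 0 + x 1 + x 2 = 0) (sy : y 0 + y 1 + y 2 = 0) :
    ((2 * (M + 1) + 1 : ℕ) : ℝ) * logHeight x ≤ (M + 2) * (totalWeight K * Real.log 16) +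
      logHeight (fun i => y i / x i ^ (2 * (M + 1) + 1)) + (M + 2) * logHeight x := by
  have h := Real.log_le_log (pow_pos (mulHeight_pos x) _) (key_ineq M x y hx hy sx sy)
  have p1 := (mulHeight_pos x)
  have p2 := (mulHeight_pos (fun i => y i / x i ^ (2 * (M + 1) + 1)))
  rw [Real.log_mul (by positivity) (by positivity), Real.log_mul (by positivity) (by positivity),
    Real.log_pow, Real.log_pow, Real.log_pow, Real.log_pow] at h
  simp only [logHeight_eq_log_mulHeight]
  push_cast at h ⊢
  linarith

theorem real_core (D M : ℕ) (a b c h l : ℝ) (hh : 0 < h) (hl : l < 2 * M + 5)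
    (hc : 8 * c ≤ h) (hM : 4 * (D : ℝ) + 1 ≤ M)
    (h1 : (2 * M + 3) * h ≤ (M + 2) * c + a + (M + 2) * h)
    (h2 : a ≤ D * b) (h3 : b ≤ 1 / (8 * (D + 1)) * (l * h) + 2 * h) : False := by
  have hD : (0 : ℝ) ≤ D := by positivity
  have h4 : D * b ≤ (2 * M + 5) / 8 * h + 2 * D * h := by
    calc D * b ≤ D * (1 / (8 * (D + 1)) * (l * h) + 2 * h) := by gcongr
      _ ≤ D * (1 / (8 * (D + 1)) * ((2 * M + 5) * h) + 2 * h) := by gcongr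
      _ = (D / (D + 1)) * ((2 * M + 5) / 8 * h) + 2 * D * h := by field_simp
      _ ≤ 1 * ((2 * M + 5) / 8 * h) + 2 * D * h := by
        gcongr
        rw [div_le_one (by positivity)]; linarith
      _ = _ := by ring
  have h5 : (M + 2) * c ≤ (M + 2) * (h / 8) := by gcongr; linarith
  have h6 : (M + 1 : ℝ) * h ≤ ((M + 2) / 8 + (2 * M + 5) / 8 + 2 * D) * h := by nlinarith
  have h7 := le_of_mul_le_mul_right h6 hh
  linarith

open Height in
theorem sunit_finite (T : Finset (FinitePlace K)) : (Sol T).Finite := by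
  by_contra hinf
  have hinf : (Sol T).Infinite := hinf
  set D := Fintype.card (InfinitePlace K ⊕ T) with hD
  set ε : ℝ := 1 / (8 * (D + 1)) with hε
  have hε0 : 0 < ε := by positivity
  set c : ℝ := totalWeight K * Real.log 16 with hc
  have hc0 : 0 ≤ c := mul_nonneg (by positivity) (Real.log_nonneg (by norm_num))
  set h : K → ℝ := fun u => logHeight (vec u) with hh
  have hinf1 : (Sol T \ {u | h u ≤ 8 * c + 1}).Infinite := hinf.sdiff (northcott_vec _)
  set A := Sol T \ {u | h u ≤ 8 * c + 1} with hA
  have hAi : Infinite A := hinf1.to_subtype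
  have hAh : ∀ u ∈ A, 8 * c + 1 < h u := fun u hu => not_le.1 hu.2
  set B : ℤ := ⌈1 / ε⌉ + 1 with hB
  have hcell : ∀ (u : A) (si : (InfinitePlace K ⊕ T) × Fin 3),
      ⌊ell T si.1 (vec u si.2) / h u / ε⌋ ∈ Set.Icc (-B) B := by
    rintro ⟨u, hu⟩ ⟨s, i⟩
    have h1 := abs_ell_le T (vec u) (vec_ne hu.1) (vec_one hu.1) rfl s i
    have h0 : 0 < h u := by linarith [hAh u hu]
    have h2 : |ell T s (vec u i) / h u| ≤ 1 := by
      rw [abs_div, abs_of_pos h0, div_le_one h0]; exact h1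
    have h3 : |ell T s (vec u i) / h u / ε| ≤ 1 / ε := by
      rw [abs_div, abs_of_pos hε0]; gcongr
    have h4 : 1 / ε ≤ ⌈1 / ε⌉ := Int.le_ceil _
    obtain ⟨h5, h6⟩ := abs_le.1 h3
    constructor
    · apply Int.le_floor.2
      push_cast [hB]
      linarith
    · have := Int.floor_le (ell T s (vec u i) / h u / ε)
      have : (⌊ell T s (vec u i) / h u / ε⌋ : ℝ) ≤ B := by push_cast [hB]; linarith
      exact_mod_cast this
  obtain ⟨cell, hcinf⟩ := Finite.exists_infinite_fiber
    (fun (u : A) (si : (InfinitePlace K ⊕ T) × Fin 3) =>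
      (⟨⌊ell T si.1 (vec u si.2) / h u / ε⌋, hcell u si⟩ : Set.Icc (-B) B))
  set F := (fun (u : A) (si : (InfinitePlace K ⊕ T) × Fin 3) =>
      (⟨⌊ell T si.1 (vec u si.2) / h u / ε⌋, hcell u si⟩ : Set.Icc (-B) B)) with hF
  have hcinf := Set.infinite_coe_iff.1 hcinf
  obtain ⟨⟨x, hx⟩, hxc⟩ := hcinf.nonempty
  have hx0 : 0 < h x := by linarith [hAh x hx]
  have hfin : {u : A | h u.1 ≤ (8 * D + 20) * h x}.Finite :=
    Set.Finite.preimage (Subtype.val_injective.injOn) (northcott_vec ((8 * D + 20) * h x))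
  obtain ⟨⟨y, hy⟩, hyc, hyh⟩ := (hcinf.sdiff hfin).nonempty
  have hyh : (8 * D + 20) * h x < h y := not_le.1 hyh
  have hy0 : 0 < h y := by linarith [hAh y hy]
  set l := h y / h x with hl
  have hlx : l * h x = h y := div_mul_cancel₀ _ hx0.ne'
  have hl1 : 8 * D + 20 < l := by rwa [hl, lt_div_iff₀ hx0]
  have hD0 : (0 : ℝ) ≤ D := by positivity
  have hl3 : 0 ≤ (l - 3) / 2 := by linarith
  set M := ⌊(l - 3) / 2⌋₊ with hM
  have hM1 : (M : ℝ) ≤ (l - 3) / 2 := Nat.floor_le hl3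
  have hM2 : (l - 3) / 2 < M + 1 := Nat.lt_floor_add_one _
  have close : ∀ s i, |ell T s (vec y i) - l * ell T s (vec x i)| ≤ ε * h y := by
    intro s i
    have e : ⌊ell T s (vec y i) / h y / ε⌋ = ⌊ell T s (vec x i) / h x / ε⌋ := by
      have e1 := congrFun (hyc.trans hxc.symm) (s, i)
      exact congrArg Subtype.val e1
    have e2 := (Int.abs_sub_lt_one_of_floor_eq_floor e).le
    have e3 : ell T s (vec y i) - l * ell T s (vec x i) =
        (ell T s (vec y i) / h y / ε - ell T s (vec x i) / h x / ε) * (ε * h y) := by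
      rw [hl]; field_simp
    rw [e3, abs_mul, abs_of_pos (mul_pos hε0 hy0)]
    have := mul_le_mul_of_nonneg_right e2 (mul_pos hε0 hy0).le
    rwa [one_mul] at this
  have hkey := key_log M (vec x) (vec y) (vec_ne hx.1) (vec_ne hy.1)
    (by simp [vec]) (by simp [vec])
  set n := 2 * (M + 1) + 1 with hn
  have hb : ∀ s i, ell T s (vec y i / vec x i ^ n) ≤ ε * (l * h x) + 2 * h x := by
    intro s i
    rw [ell_div T s (vec_ne hy.1 i) (pow_ne_zero _ (vec_ne hx.1 i)), ell_pow, hlx]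
    have h1 := abs_ell_le T (vec x) (vec_ne hx.1) (vec_one hx.1) rfl s i
    have h2 := close s i
    have h3 : |(l - n) * ell T s (vec x i)| ≤ 2 * h x := by
      rw [abs_mul]
      have : |l - n| ≤ 2 := by
        rw [abs_le, hn]; push_cast; constructor <;> linarith
      exact mul_le_mul this h1 (abs_nonneg _) (by norm_num)
    have h4 := (abs_le.1 h2).2
    have h5 := (abs_le.1 h3).2
    linarith
  have ht := logHeight_le T (fun i => vec y i / vec x i ^ n)
    (fun i => div_ne_zero (vec_ne hy.1 i) (pow_ne_zero _ (vec_ne hx.1 i)))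
    (fun w hw i => by rw [map_div₀, map_pow, vec_one hy.1 w hw, vec_one hx.1 w hw]; simp)
    _ hb
  refine real_core D M _ _ c (h x) l hx0 ?_ ?_ ?_ ?_ ht le_rfl
  · linarith
  · linarith [hAh x hx]
  · linarith
  · have : ((n : ℕ) : ℝ) = 2 * M + 3 := by rw [hn]; push_cast; ring
    rw [← this]
    exact hkey
end MS

namespace MS

/-- `x` becomes integral after multiplication by a power of `N`. -/
def SInt {K : Type*} [Field K] (N : ℕ) (x : K) : Prop := ∃ k : ℕ, IsIntegral ℤ ((N : K) ^ k * x)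

section SInt
variable {K : Type*} [Field K]

theorem isInt_nat (n : ℕ) : IsIntegral ℤ (n : K) := by
  simpa using isIntegral_algebraMap (R := ℤ) (A := K) (x := (n : ℤ))

theorem SInt.of_int {N : ℕ} {x : K} (h : IsIntegral ℤ x) : SInt N x := ⟨0, by simpa using h⟩

theorem SInt.add {N : ℕ} {x y : K} (hx : SInt N x) (hy : SInt N y) : SInt N (x + y) := by
  obtain ⟨k, hk⟩ := hx
  obtain ⟨l, hl⟩ := hy
  refine ⟨k + l, ?_⟩
  rw [show (N : K) ^ (k + l) * (x + y) = (N : K) ^ l * ((N : K) ^ k * x) +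
    (N : K) ^ k * ((N : K) ^ l * y) by ring]
  exact (((isInt_nat N).pow l).mul hk).add (((isInt_nat N).pow k).mul hl)

theorem SInt.mul {N : ℕ} {x y : K} (hx : SInt N x) (hy : SInt N y) : SInt N (x * y) := by
  obtain ⟨k, hk⟩ := hx
  obtain ⟨l, hl⟩ := hy
  refine ⟨k + l, ?_⟩
  rw [show (N : K) ^ (k + l) * (x * y) = ((N : K) ^ k * x) * ((N : K) ^ l * y) by ring]
  exact hk.mul hl

theorem SInt.neg {N : ℕ} {x : K} (hx : SInt N x) : SInt N (-x) := by
  obtain ⟨k, hk⟩ := hx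
  exact ⟨k, by rw [mul_neg]; exact hk.neg⟩

theorem SInt.sub {N : ℕ} {x y : K} (hx : SInt N x) (hy : SInt N y) : SInt N (x - y) := by
  rw [sub_eq_add_neg]; exact hx.add hy.neg

theorem SInt.of_sq {N : ℕ} {x : K} (hx : SInt N (x ^ 2)) : SInt N x := by
  obtain ⟨k, hk⟩ := hx
  refine ⟨k, IsIntegral.of_pow (n := 2) (by norm_num) ?_⟩
  rw [show ((N : K) ^ k * x) ^ 2 = (N : K) ^ k * ((N : K) ^ k * x ^ 2) by ring]
  exact ((isInt_nat N).pow k).mul hk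

theorem SInt.mono {M N : ℕ} {x : K} (hx : SInt M x) (h : M ∣ N) : SInt N x := by
  obtain ⟨k, hk⟩ := hx
  obtain ⟨c, rfl⟩ := h
  refine ⟨k, ?_⟩
  rw [show ((M * c : ℕ) : K) ^ k * x = (c : K) ^ k * ((M : K) ^ k * x) by push_cast; ring]
  exact ((isInt_nat c).pow k).mul hk

theorem SInt.map {L : Type*} [Field L] (f : K →+* L) {N : ℕ} {x : K} (hx : SInt N x) :
    SInt N (f x) := by
  obtain ⟨k, hk⟩ := hx
  refine ⟨k, ?_⟩
  have := hk.map f.toIntAlgHom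
  simpa using this

theorem SInt.exists_one [NumberField K] (x : K) : ∃ N : ℕ, N ≠ 0 ∧ SInt N x := by
  have hx : IsAlgebraic ℤ x := by
    have := Algebra.IsAlgebraic.isAlgebraic (R := ℚ) x
    exact (IsFractionRing.isAlgebraic_iff ℤ ℚ K).2 this
  obtain ⟨y, hy, hyz⟩ := hx.exists_integral_multiple
  refine ⟨y.natAbs, by simpa using hy, 1, ?_⟩
  rw [zsmul_eq_mul] at hyz
  rw [pow_one]
  rcases Int.natAbs_eq y with h | h
  · rw [h] at hyz; simpa using hyz
  · rw [h] at hyz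
    simpa using hyz.neg

theorem SInt.exists_fin [NumberField K] (E : Finset K) : ∃ N : ℕ, N ≠ 0 ∧ ∀ x ∈ E, SInt N x := by
  classical
  induction E using Finset.induction_on with
  | empty => exact ⟨1, one_ne_zero, by simp⟩
  | insert a s ha ih =>
    obtain ⟨N, hN, h⟩ := ih
    obtain ⟨M, hM, h'⟩ := SInt.exists_one a
    refine ⟨N * M, mul_ne_zero hN hM, fun x hx => ?_⟩
    rcases Finset.mem_insert.1 hx with rfl | hx
    · exact h'.mono (Dvd.intro_left _ rfl)
    · exact (h x hx).mono (Dvd.intro _ rfl)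

variable [NumberField K]

theorem place_int (w : FinitePlace K) {x : K} (hx : IsIntegral ℤ x) : w x ≤ 1 := by
  rw [← w.norm_embedding_eq]
  exact FinitePlace.norm_le_one K w.maximalIdeal (⟨x, hx⟩ : 𝓞 K)

theorem SInt.place_le {N : ℕ} {x : K} (hx : SInt N x) (w : FinitePlace K) (hw : w (N : K) = 1) :
    w x ≤ 1 := by
  obtain ⟨k, hk⟩ := hx
  have := place_int w hk
  rwa [map_mul, map_pow, hw, one_pow, one_mul] at this

theorem SInt.val_le {N : ℕ} {x : K} (hx : SInt N x) (v : HeightOneSpectrum (𝓞 K))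
    (hv : v.valuation K (N : K) = 1) : v.valuation K x ≤ 1 := by
  obtain ⟨k, hk⟩ := hx
  have := v.valuation_le_one (K := K) (⟨_, hk⟩ : 𝓞 K)
  change v.valuation K ((N : K) ^ k * x) ≤ 1 at this
  rwa [map_mul, map_pow, hv, one_pow, one_mul] at this

/-- `S`-units -/
def SU (N : ℕ) (x : K) : Prop := x ≠ 0 ∧ SInt N x ∧ SInt N x⁻¹

theorem SU.mul {N : ℕ} {x y : K} (hx : SU N x) (hy : SU N y) : SU N (x * y) :=
  ⟨mul_ne_zero hx.1 hy.1, hx.2.1.mul hy.2.1, by rw [mul_inv]; exact hx.2.2.mul hy.2.2⟩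

theorem SU.inv {N : ℕ} {x : K} (hx : SU N x) : SU N x⁻¹ :=
  ⟨inv_ne_zero hx.1, hx.2.2, by rw [inv_inv]; exact hx.2.1⟩

theorem SU.div {N : ℕ} {x y : K} (hx : SU N x) (hy : SU N y) : SU N (x / y) := by
  rw [div_eq_mul_inv]; exact hx.mul hy.inv

theorem SU.neg {N : ℕ} {x : K} (hx : SU N x) : SU N (-x) :=
  ⟨neg_ne_zero.2 hx.1, hx.2.1.neg, by rw [inv_neg]; exact hx.2.2.neg⟩

theorem SU.place {N : ℕ} {x : K} (hx : SU N x) (w : FinitePlace K) (hw : w (N : K) = 1) :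
    w x = 1 := by
  apply le_antisymm (hx.2.1.place_le w hw)
  have h := hx.2.2.place_le w hw
  rw [map_inv₀] at h
  exact (inv_le_one₀ (FinitePlace.pos_iff.2 hx.1)).1 h

theorem SU.val {N : ℕ} {x : K} (hx : SU N x) (v : HeightOneSpectrum (𝓞 K))
    (hv : v.valuation K (N : K) = 1) : v.valuation K x = 1 := by
  apply le_antisymm (hx.2.1.val_le v hv)
  have h := hx.2.2.val_le v hv
  rw [map_inv₀] at h
  exact (inv_le_one₀ (zero_lt_iff.2 ((Valuation.ne_zero_iff _).2 hx.1))).1 h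

theorem SU_of_mul {N : ℕ} {x y d : K} (hx : SInt N x) (hy : SInt N y) (hd : SU N d)
    (h : x * y = d) : SU N x := by
  have hx0 : x ≠ 0 := by rintro rfl; exact hd.1 (by simp [← h])
  refine ⟨hx0, hx, ?_⟩
  have : x⁻¹ = y * d⁻¹ := by
    rw [← h]
    have : y ≠ 0 := by rintro rfl; exact hd.1 (by simp [← h])
    field_simp
  rw [this]
  exact hy.mul hd.2.2

theorem SU_finite (N : ℕ) (hN : N ≠ 0) : {u : K | SU N u ∧ SU N (1 - u)}.Finite := by
  have hfin := FinitePlace.hasFiniteMulSupport (K := K) (x := (N : K)) (by exact_mod_cast hN)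
  refine (sunit_finite (hfin.toFinset)).subset ?_
  rintro u ⟨h1, h2⟩
  refine ⟨h1.1, h2.1, fun w hw => ?_⟩
  have hw : w (N : K) = 1 := by
    by_contra h
    exact hw (hfin.mem_toFinset.2 h)
  exact ⟨h1.place w hw, h2.place w hw⟩

theorem thmU_aux (N : ℕ) (hN : N ≠ 0) (a b c : K) (ha : SInt N a) (hb : SInt N b) (hc : SInt N c)
    (hab : SU N (b - a)) (hac : SU N (c - a)) (hbc : SU N (c - b)) :
    {X : K | SInt N X ∧ (∃ w, X - a = w ^ 2) ∧ (∃ w, X - b = w ^ 2) ∧ ∃ w, X - c = w ^ 2}.Finite := by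
  have F := SU_finite (K := K) N hN
  refine ((F.prod F).image fun p => a + (p.1 + p.2) ^ 2 * (b - a) / (4 * p.1 * p.2)).subset ?_
  rintro X ⟨hX, ⟨x, hx⟩, ⟨y, hy⟩, ⟨z, hz⟩⟩
  have sx : SInt N x := SInt.of_sq (hx ▸ hX.sub ha)
  have sy : SInt N y := SInt.of_sq (hy ▸ hX.sub hb)
  have sz : SInt N z := SInt.of_sq (hz ▸ hX.sub hc)
  have u1 : SU N (x - y) := SU_of_mul (sx.sub sy) (sx.add sy) hab (by linear_combination hy - hx)
  have u2 : SU N (x + y) := SU_of_mul (sx.add sy) (sx.sub sy) hab (by linear_combination hy - hx)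
  have u3 : SU N (x - z) := SU_of_mul (sx.sub sz) (sx.add sz) hac (by linear_combination hz - hx)
  have u4 : SU N (y - z) := SU_of_mul (sy.sub sz) (sy.add sz) hbc (by linear_combination hz - hy)
  have u5 : SU N (y + z) := SU_of_mul (sy.add sz) (sy.sub sz) hbc (by linear_combination hz - hy)
  have n3 := u3.1
  have n1 := u1.1
  have n2 := u2.1
  refine ⟨((x - y) / (x - z), (x + y) / (x - z)), ⟨⟨u1.div u3, ?_⟩, u2.div u3, ?_⟩, ?_⟩
  · have : 1 - (x - y) / (x - z) = (y - z) / (x - z) := by field_simp; ring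
    rw [this]; exact u4.div u3
  · have : 1 - (x + y) / (x - z) = -(y + z) / (x - z) := by field_simp; ring
    rw [this]; exact u5.neg.div u3
  · have e : b - a = (x - y) * (x + y) := by linear_combination hx - hy
    have e2 : X = a + x ^ 2 := by linear_combination hx
    simp only
    rw [e, e2]
    field_simp
    ring

theorem thmU (N : ℕ) (hN : N ≠ 0) (a b c : K) (hab : a ≠ b) (hac : a ≠ c) (hbc : b ≠ c) :
    {X : K | SInt N X ∧ (∃ w, X - a = w ^ 2) ∧ (∃ w, X - b = w ^ 2) ∧ ∃ w, X - c = w ^ 2}.Finite := by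
  classical
  obtain ⟨M, hM, h⟩ := SInt.exists_fin ({a, b, c, (b - a)⁻¹, (c - a)⁻¹, (c - b)⁻¹} : Finset K)
  have h' : ∀ x ∈ ({a, b, c, (b - a)⁻¹, (c - a)⁻¹, (c - b)⁻¹} : Finset K), SInt (N * M) x :=
    fun x hx => (h x hx).mono (Dvd.intro_left _ rfl)
  have ha := h' a (by simp)
  have hb := h' b (by simp)
  have hc := h' c (by simp)
  refine (thmU_aux (N * M) (mul_ne_zero hN hM) a b c ha hb hc
    ⟨sub_ne_zero.2 hab.symm, hb.sub ha, h' _ (by simp)⟩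
    ⟨sub_ne_zero.2 hac.symm, hc.sub ha, h' _ (by simp)⟩
    ⟨sub_ne_zero.2 hbc.symm, hc.sub hb, h' _ (by simp)⟩).subset ?_
  rintro X ⟨hX, hr⟩
  exact ⟨hX.mono (Dvd.intro _ rfl), hr⟩

end SInt
end MS

namespace MS
section Selmer
variable {K : Type*} [Field K] [NumberField K]

theorem sint_of_integer (S : Set (HeightOneSpectrum (𝓞 K))) (hS : S.Finite) :
    ∃ N : ℕ, N ≠ 0 ∧ ∀ x ∈ S.integer K, SInt N x := by
  classical
  refine ⟨∏ v ∈ hS.toFinset, Ideal.absNorm v.asIdeal, ?_, ?_⟩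
  · refine Finset.prod_ne_zero_iff.2 fun v _ => ?_
    exact Ideal.absNorm_ne_zero_of_nonZeroDivisors ⟨v.asIdeal, by simpa using v.ne_bot⟩
  · intro x hx
    set N := ∏ v ∈ hS.toFinset, Ideal.absNorm v.asIdeal with hN
    rcases eq_or_ne x 0 with rfl | hx0
    · exact ⟨0, by simpa using isIntegral_zero⟩
    have hle : ∀ v : HeightOneSpectrum (𝓞 K), v.valuation K (N : K) ≤ 1 := fun v => by
      have := v.valuation_le_one (K := K) (N : 𝓞 K)
      simpa using this
    have hlt : ∀ v ∈ S, v.valuation K (N : K) < 1 := fun v hv => by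
      have := (v.valuation_lt_one_iff_mem (K := K) (N : 𝓞 K)).2 (by
        have h1 := Ideal.absNorm_mem v.asIdeal
        obtain ⟨c, hc⟩ := Finset.dvd_prod_of_mem (fun v : HeightOneSpectrum (𝓞 K) =>
          Ideal.absNorm v.asIdeal) (hS.mem_toFinset.2 hv)
        rw [hN, hc]
        push_cast
        exact Ideal.mul_mem_right _ _ h1)
      simpa using this
    have hk : ∀ v : HeightOneSpectrum (𝓞 K), ∃ k : ℕ, v ∈ S →
        v.valuation K (N : K) ^ k * v.valuation K x ≤ 1 := by
      intro v
      by_cases hv : v ∈ S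
      · have hne : v.valuation K x ≠ 0 := (Valuation.ne_zero_iff _).2 hx0
        obtain ⟨k, hk⟩ := exists_pow_lt₀ (hlt v hv) (Units.mk0 _ hne)⁻¹
        refine ⟨k, fun _ => ?_⟩
        have h3 := mul_le_mul_left hk.le (v.valuation K x)
        refine h3.trans (le_of_eq ?_)
        rw [Units.val_inv_eq_inv_val, Units.val_mk0]
        exact inv_mul_cancel₀ hne
      · exact ⟨0, fun h => absurd h hv⟩
    choose k hk using hk
    refine ⟨∑ v ∈ hS.toFinset, k v, ?_⟩
    obtain ⟨y, hy⟩ := HeightOneSpectrum.mem_integers_of_valuation_le_one (R := 𝓞 K) K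
      ((N : K) ^ (∑ v ∈ hS.toFinset, k v) * x) (by
        intro v
        rw [map_mul, map_pow]
        by_cases hv : v ∈ S
        · refine le_trans ?_ (hk v hv)
          gcongr ?_ * _
          exact pow_le_pow_right_of_le_one' (hle v)
            (Finset.single_le_sum (f := k) (fun _ _ => Nat.zero_le _) (hS.mem_toFinset.2 hv))
        · have h1 : v.valuation K x ≤ 1 := hx v hv
          exact mul_le_one' (pow_le_one' (hle v) _) h1)
    rw [← hy]
    exact y.isIntegral_coe

theorem units_mod_sq : ∃ E : Set (𝓞 K)ˣ, E.Finite ∧ ∀ x : (𝓞 K)ˣ, ∃ e ∈ E, ∃ h, x = e * h ^ 2 := by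
  refine ⟨Set.range fun p : Units.torsion K × (Fin (Units.rank K) → Fin 2) =>
    (p.1 : (𝓞 K)ˣ) * ∏ i, (Units.fundSystem K i) ^ ((p.2 i : ℕ)), Set.finite_range _, fun x => ?_⟩
  obtain ⟨⟨z, e⟩, h, -⟩ := Units.exist_unique_eq_mul_prod K x
  refine ⟨_, ⟨(z, fun i => ⟨(e i % 2).toNat, by omega⟩), rfl⟩,
    ∏ i, (Units.fundSystem K i) ^ (e i / 2), ?_⟩
  rw [h]
  simp only
  rw [mul_assoc, ← Finset.prod_pow, ← Finset.prod_mul_distrib]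
  congr 1
  refine Finset.prod_congr rfl fun i _ => ?_
  rw [← zpow_natCast, ← zpow_natCast, ← zpow_mul, ← zpow_add]
  congr 1
  push_cast
  rw [Int.toNat_of_nonneg (by omega)]
  omega

/-- multiplicity -/
noncomputable def cnt (v : HeightOneSpectrum (𝓞 K)) (m : 𝓞 K) : ℕ :=
  (Associates.mk v.asIdeal).count (Associates.mk (Ideal.span {m} : Ideal (𝓞 K))).factors

theorem cnt_fin {m : 𝓞 K} (hm : m ≠ 0) : {v | cnt v m ≠ 0}.Finite := by
  have h0 : (Ideal.span {m} : Ideal (𝓞 K)) ≠ 0 := by simpa using hm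
  have := Filter.eventually_cofinite.mp (Associates.finite_factors h0)
  refine this.subset fun v hv => ?_
  exact_mod_cast hv

/-- the part with odd exponent -/
noncomputable def QQ (m : 𝓞 K) : Ideal (𝓞 K) :=
  ∏ᶠ v : HeightOneSpectrum (𝓞 K), v.asIdeal ^ (cnt v m % 2)

theorem decomp {m : 𝓞 K} (hm : m ≠ 0) : ∃ J : nonZeroDivisors (Ideal (𝓞 K)),
    (Ideal.span {m} : Ideal (𝓞 K)) = (J : Ideal (𝓞 K)) ^ 2 * QQ m := by
  have h0 : (Ideal.span {m} : Ideal (𝓞 K)) ≠ 0 := by simpa using hm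
  have f1 : (fun v : HeightOneSpectrum (𝓞 K) => v.asIdeal ^ (cnt v m / 2)).HasFiniteMulSupport := by
    refine (cnt_fin hm).subset fun v hv hv0 => hv ?_
    simp [hv0]
  have f2 : (fun v : HeightOneSpectrum (𝓞 K) => v.asIdeal ^ (cnt v m % 2)).HasFiniteMulSupport := by
    refine (cnt_fin hm).subset fun v hv hv0 => hv ?_
    simp [hv0]
  have f3 : (fun v : HeightOneSpectrum (𝓞 K) =>
      (v.asIdeal ^ (cnt v m / 2)) ^ 2).HasFiniteMulSupport := by
    refine (cnt_fin hm).subset fun v hv hv0 => hv ?_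
    simp [hv0]
  have e : (Ideal.span {m} : Ideal (𝓞 K)) = (∏ᶠ v : HeightOneSpectrum (𝓞 K),
      v.asIdeal ^ (cnt v m / 2)) ^ 2 * QQ m := by
    rw [finprod_pow f1, QQ, ← finprod_mul_distrib f3 f2]
    conv_lhs => rw [← Ideal.finprod_heightOneSpectrum_factorization h0]
    refine finprod_congr fun v => ?_
    rw [← pow_mul, ← pow_add]
    change v.asIdeal ^ (cnt v m) = _
    congr 1
    omega
  refine ⟨⟨∏ᶠ v : HeightOneSpectrum (𝓞 K), v.asIdeal ^ (cnt v m / 2), ?_⟩, e⟩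
  rw [mem_nonZeroDivisors_iff_ne_zero]
  intro h
  rw [h] at e
  apply h0
  rw [e]; simp

theorem QQ_congr {m n : 𝓞 K} (h : ∀ v, cnt v m % 2 = cnt v n % 2) : QQ m = QQ n :=
  finprod_congr fun v => by rw [h]

theorem cnt_even {m : 𝓞 K} (hm : m ≠ 0) (v : HeightOneSpectrum (𝓞 K))
    (h : IsSquare (v.valuation K (m : K))) : cnt v m % 2 = 0 := by
  obtain ⟨g, hg⟩ := h
  have h1 := v.valuation_of_algebraMap (K := K) m
  have h1 : v.valuation K (m : K) = _ := h1.trans (v.intValuation_if_neg hm)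
  rw [h1] at hg
  have hg0 : g ≠ 0 := by
    rintro rfl
    rw [mul_zero] at hg
    exact WithZero.exp_ne_zero hg
  rw [← WithZero.exp_log hg0, ← WithZero.exp_add, WithZero.exp_inj] at hg
  change -((cnt v m : ℕ) : ℤ) = _ at hg
  omega

end Selmer
end MS

namespace MS
section Selmer2
variable {K : Type*} [Field K] [NumberField K]

theorem selmer_int (T : Set (HeightOneSpectrum (𝓞 K))) (hT : T.Finite) :
    ∃ A : Set K, A.Finite ∧ ∀ m : 𝓞 K, m ≠ 0 → (∀ v ∉ T, cnt v m % 2 = 0) →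
      ∃ a ∈ A, ∃ z : K, (m : K) = a * z ^ 2 := by
  classical
  obtain ⟨E, hE, hE2⟩ := units_mod_sq (K := K)
  let X := {m : 𝓞 K // m ≠ 0 ∧ ∀ v ∉ T, cnt v m % 2 = 0}
  by_cases hX : Nonempty X
  swap
  · exact ⟨∅, Set.finite_empty, fun m h1 h2 => absurd ⟨⟨m, h1, h2⟩⟩ hX⟩
  haveI : Finite T := hT
  choose J hJ using fun m : X => decomp m.2.1
  let Φ : X → (T → Fin 2) × ClassGroup (𝓞 K) := fun m =>
    (fun v => ⟨cnt v.1 m.1 % 2, Nat.mod_lt _ (by norm_num)⟩, ClassGroup.mk0 (J m))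
  let rep : (T → Fin 2) × ClassGroup (𝓞 K) → X := Function.invFun Φ
  refine ⟨Set.image2 (fun (b : (T → Fin 2) × ClassGroup (𝓞 K)) (e : (𝓞 K)ˣ) =>
    (((rep b).1 : 𝓞 K) : K) * ((e : 𝓞 K) : K)) Set.univ E,
    Set.Finite.image2 _ Set.finite_univ hE, fun m h1 h2 => ?_⟩
  let mm : X := ⟨m, h1, h2⟩
  have hrep : Φ (rep (Φ mm)) = Φ mm := Function.invFun_eq ⟨mm, rfl⟩
  generalize hn : rep (Φ mm) = n at hrep
  have hQ : QQ m = QQ n.1 := by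
    refine QQ_congr fun v => ?_
    by_cases hv : v ∈ T
    · have := congrFun (congrArg Prod.fst hrep) ⟨v, hv⟩
      exact (congrArg Fin.val this).symm
    · rw [h2 v hv, n.2.2 v hv]
  have hC : ClassGroup.mk0 (J mm) = ClassGroup.mk0 (J n) := (congrArg Prod.snd hrep).symm
  obtain ⟨α, β, hα, hβ, hαβ⟩ := ClassGroup.mk0_eq_mk0_iff.1 hC
  have h3 : (Ideal.span {n.1 * β ^ 2} : Ideal (𝓞 K)) = Ideal.span {m * α ^ 2} := by
    rw [← Ideal.span_singleton_mul_span_singleton, ← Ideal.span_singleton_mul_span_singleton,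
      ← Ideal.span_singleton_pow, ← Ideal.span_singleton_pow, hJ n,
      show (Ideal.span {m} : Ideal (𝓞 K)) = _ from hJ mm]
    change _ = (J mm : Ideal (𝓞 K)) ^ 2 * QQ m * _
    rw [hQ]
    calc _ = (Ideal.span {β} * (J n : Ideal (𝓞 K))) ^ 2 * QQ n.1 := by ring
      _ = (Ideal.span {α} * (J mm : Ideal (𝓞 K))) ^ 2 * QQ n.1 := by rw [hαβ]
      _ = _ := by ring
  obtain ⟨u, hu⟩ := Ideal.span_singleton_eq_span_singleton.1 h3
  obtain ⟨e, he, h, rfl⟩ := hE2 u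
  refine ⟨_, ⟨Φ mm, Set.mem_univ _, e, he, rfl⟩, ((h : 𝓞 K) : K) * β / α, ?_⟩
  have hα' : (α : K) ≠ 0 := by simpa using hα
  have h4 := congrArg (algebraMap (𝓞 K) K) hu
  simp only [map_mul, map_pow, Units.val_mul, Units.val_pow_eq_pow_val] at h4
  simp only [hn]
  field_simp
  linear_combination -h4

theorem selmer (T : Set (HeightOneSpectrum (𝓞 K))) (hT : T.Finite) :
    ∃ A : Set K, A.Finite ∧ ∀ x : K, x ≠ 0 → (∀ v ∉ T, IsSquare (v.valuation K x)) →
      ∃ a ∈ A, ∃ z : K, x = a * z ^ 2 := by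
  obtain ⟨A, hA, h⟩ := selmer_int T hT
  refine ⟨A, hA, fun x hx hv => ?_⟩
  obtain ⟨a, b, hb, rfl⟩ := IsFractionRing.div_surjective (A := 𝓞 K) x
  have hb0 : b ≠ 0 := nonZeroDivisors.ne_zero hb
  have hb' : algebraMap (𝓞 K) K b ≠ 0 := by simpa using hb0
  have ha0 : a ≠ 0 := by
    rintro rfl
    simp at hx
  obtain ⟨c, hc, z, hz⟩ := h (a * b) (mul_ne_zero ha0 hb0) (fun v hv' => by
    refine cnt_even (mul_ne_zero ha0 hb0) v ?_
    obtain ⟨g, hg⟩ := hv v hv'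
    refine ⟨g * v.valuation K (algebraMap (𝓞 K) K b), ?_⟩
    rw [mul_mul_mul_comm, ← hg, ← map_mul, ← map_mul]
    congr 1
    simp only [map_mul]
    field_simp)
  refine ⟨c, hc, z / algebraMap (𝓞 K) K b, ?_⟩
  simp only [map_mul] at hz
  field_simp
  linear_combination hz

theorem bad_fin (N : ℕ) (hN : N ≠ 0) :
    {v : HeightOneSpectrum (𝓞 K) | v.valuation K (N : K) ≠ 1}.Finite := by
  have h0 : (Ideal.span {(N : 𝓞 K)} : Ideal (𝓞 K)) ≠ 0 := by simpa using hN
  refine (Ideal.finite_factors h0).subset fun v hv => ?_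
  by_contra h
  apply hv
  have := (v.valuation_eq_one_iff_notMem (K := K) (r := (N : 𝓞 K))).2 (fun h' => h (by
    simpa [Ideal.dvd_span_singleton] using h'))
  simpa using this

theorem sqrt_field.{u} {L : Type u} [Field L] [NumberField L] (A : Finset L) :
    ∃ (M : Type u) (_ : Field M) (_ : NumberField M) (φ : L →+* M),
      ∀ a ∈ A, ∃ z, φ a = z ^ 2 := by
  classical
  let p : Polynomial L := ∏ a ∈ A, (Polynomial.X ^ 2 - Polynomial.C a)
  have hp : p ≠ 0 := Finset.prod_ne_zero_iff.2 fun a _ =>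
    Polynomial.X_pow_sub_C_ne_zero (by norm_num) a
  haveI : CharZero p.SplittingField := charZero_of_injective_algebraMap
    (algebraMap L p.SplittingField).injective
  haveI : NumberField p.SplittingField :=
    { to_charZero := inferInstance
      to_finiteDimensional := FiniteDimensional.trans ℚ L _ }
  refine ⟨p.SplittingField, inferInstance, inferInstance, algebraMap L _, fun a ha => ?_⟩
  have h1 : (p.map (algebraMap L p.SplittingField)).Splits := Polynomial.SplittingField.splits p
  have h2 : ((Polynomial.X ^ 2 - Polynomial.C a).map (algebraMap L p.SplittingField)) ∣
      p.map (algebraMap L p.SplittingField) := Polynomial.map_dvd _ (Finset.dvd_prod_of_mem _ ha)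
  have h3 := h1.of_dvd ((Polynomial.map_ne_zero_iff (algebraMap L _).injective).2 hp) h2
  obtain ⟨z, hz⟩ := h3.exists_eval_eq_zero (by
    rw [Polynomial.degree_map, Polynomial.degree_X_pow_sub_C (by norm_num)]; norm_num)
  refine ⟨z, ?_⟩
  simp at hz
  linear_combination -hz

end Selmer2
end MS

namespace MS
section Final

theorem core.{u} {L : Type u} [Field L] [NumberField L] (N : ℕ) (hN : N ≠ 0) (c : L) (hc : c ≠ 0)
    (R : Finset L) (hR : 3 ≤ R.card) :
    {X : L | SInt N X ∧ ∃ Y, Y ^ 2 = c * ∏ α ∈ R, (X - α)}.Finite := by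
  classical
  obtain ⟨N₁, hN₁, h1⟩ := SInt.exists_fin (R ∪ (Finset.image₂ (fun a b => (a - b)⁻¹) R R) ∪ {c, c⁻¹})
  set P := N * N₁ with hP
  have hP0 : P ≠ 0 := mul_ne_zero hN hN₁
  have hroot : ∀ α ∈ R, SInt P α := fun α hα =>
    (h1 α (by simp [hα])).mono (Dvd.intro_left _ rfl)
  have hdiff : ∀ α ∈ R, ∀ β ∈ R, α ≠ β → SU P (α - β) := fun α hα β hβ h =>
    ⟨sub_ne_zero.2 h, (hroot α hα).sub (hroot β hβ),
      (h1 _ (Finset.mem_union_left _ (Finset.mem_union_right _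
        (Finset.mem_image₂.2 ⟨α, hα, β, hβ, rfl⟩)))).mono (Dvd.intro_left _ rfl)⟩
  have hcU : SU P c := ⟨hc, (h1 c (by simp)).mono (Dvd.intro_left _ rfl),
    (h1 c⁻¹ (by simp)).mono (Dvd.intro_left _ rfl)⟩
  obtain ⟨A, hA, hsel⟩ := selmer _ (bad_fin (K := L) P hP0)
  obtain ⟨M, _, _, φ, hφ⟩ := sqrt_field hA.toFinset
  obtain ⟨a, b, d, ha, hb, hd, hab, had, hbd⟩ := Finset.two_lt_card_iff.1 hR
  have hfin := thmU (K := M) P hP0 (φ a) (φ b) (φ d) (φ.injective.ne hab) (φ.injective.ne had)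
    (φ.injective.ne hbd)
  refine ((R.finite_toSet).union (hfin.preimage (f := φ) φ.injective.injOn)).subset ?_
  rintro X ⟨hX, Y, hY⟩
  by_cases hXR : X ∈ R
  · exact Or.inl hXR
  right
  have hXP : SInt P X := hX.mono (Dvd.intro _ rfl)
  have key : ∀ α ∈ R, ∃ w, φ X - φ α = w ^ 2 := by
    intro α hα
    have hne : X - α ≠ 0 := sub_ne_zero.2 fun h => hXR (h ▸ hα)
    obtain ⟨e, he, z, hz⟩ := hsel (X - α) hne (fun v hv => by
      have hv1 : v.valuation L (P : L) = 1 := by simpa using hv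
      have hle := (hXP.sub (hroot α hα)).val_le v hv1
      rcases hle.lt_or_eq with hlt | heq
      · refine ⟨v.valuation L Y, ?_⟩
        have h5 := congrArg (v.valuation L) hY
        rw [map_pow, map_mul, hcU.val v hv1, one_mul, map_prod, ← Finset.mul_prod_erase _ _ hα,
          Finset.prod_eq_one, mul_one] at h5
        · rw [← h5, sq]
        · intro β hβ
          obtain ⟨hβα, hβR⟩ := Finset.mem_erase.1 hβ
          have h6 := (hdiff α hα β hβR (Ne.symm hβα)).val v hv1
          have : X - β = (X - α) + (α - β) := by ring
          rw [this, Valuation.map_add_eq_of_lt_right _ (by rw [h6]; exact hlt), h6]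
      · exact ⟨1, by rw [heq, one_mul]⟩)
    obtain ⟨w, hw⟩ := hφ e (hA.mem_toFinset.2 he)
    exact ⟨w * φ z, by rw [← map_sub, hz, map_mul, map_pow, hw]; ring⟩
  exact ⟨hXP.map φ, key a ha, key b hb, key d hd⟩

theorem final (K : Type*) [Field K] [NumberField K]
    (S : Set (HeightOneSpectrum (𝓞 K))) (hS : S.Finite)
    (f : Polynomial K) (hf : Squarefree f) (hdeg : 3 ≤ f.natDegree) :
    {p : K × K | p.1 ∈ S.integer K ∧ p.2 ∈ S.integer K ∧ p.2 ^ 2 = f.eval p.1}.Finite := by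
  classical
  obtain ⟨N, hN, hSN⟩ := sint_of_integer S hS
  have hf0 : f ≠ 0 := hf.ne_zero
  have : CharZero f.SplittingField := charZero_of_injective_algebraMap
    (algebraMap K f.SplittingField).injective
  have : NumberField f.SplittingField :=
    { to_charZero := inferInstance
      to_finiteDimensional := FiniteDimensional.trans ℚ K _ }
  set φ := algebraMap K f.SplittingField with hφ
  have hsplit : (f.map φ).Splits := Polynomial.SplittingField.splits f
  have hsep : f.Separable := PerfectField.separable_iff_squarefree.2 hf
  have hnd : (f.map φ).roots.Nodup := Polynomial.nodup_roots hsep.map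
  have hcard : (f.map φ).roots.toFinset.card = f.natDegree := by
    rw [Multiset.toFinset_card_of_nodup hnd, ← hsplit.natDegree_eq_card_roots,
      Polynomial.natDegree_map]
  have hev : ∀ x : K, φ (f.eval x) =
      φ f.leadingCoeff * ∏ α ∈ (f.map φ).roots.toFinset, (φ x - α) := by
    intro x
    rw [← Polynomial.eval_map_apply]
    conv_lhs => rw [hsplit.eq_prod_roots]
    rw [Polynomial.eval_mul, Polynomial.eval_C, Polynomial.leadingCoeff_map,
      Polynomial.eval_multiset_prod, Finset.prod_eq_multiset_prod, Multiset.toFinset_val, hnd.dedup]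
    simp
  have hfin := core N hN (φ f.leadingCoeff)
    ((map_ne_zero φ).2 (Polynomial.leadingCoeff_ne_zero.2 hf0)) _ (hcard ▸ hdeg)
  have hfx := hfin.preimage (f := φ) φ.injective.injOn
  have hbig := hfx.biUnion (t := fun x => Prod.mk x '' {y : K | y ^ 2 = f.eval x}) (fun x _ => by
    refine Set.Finite.image _ ?_
    refine ((Polynomial.nthRoots 2 (f.eval x)).toFinset.finite_toSet).subset fun y hy => ?_
    simpa [Polynomial.mem_nthRoots] using hy)
  refine hbig.subset ?_
  rintro ⟨x, y⟩ ⟨hx, hy, hxy⟩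
  refine Set.mem_biUnion (x := x) ?_ ⟨y, hxy, rfl⟩
  exact ⟨(hSN x hx).map φ, φ y, by rw [← hev, ← map_pow]; exact congrArg φ hxy⟩

end Final
end MS

/-- Mahler's generalization of Siegel's theorem: for a number field `K`, a finite set `S` of
maximal ideals of its ring of integers, and a squarefree polynomial `f` over `K` of degree at
least 3, the set of pairs of `S`-integers `(x, y)` with `y² = f(x)` is finite. -/
theorem mahler_siegel (K : Type*) [Field K] [NumberField K]
    (S : Set (HeightOneSpectrum (𝓞 K))) (hS : S.Finite)
    (f : Polynomial K) (hf : Squarefree f) (hdeg : 3 ≤ f.natDegree) :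
    {p : K × K | p.1 ∈ S.integer K ∧ p.2 ∈ S.integer K ∧ p.2 ^ 2 = f.eval p.1}.Finite := by
  exact MS.final K S hS f hf hdeg
end

section
/- The S-unit equation: let K be a number field and let S be a finite set of maximal ideals of the ring of integers of K. Then the equation x + y = 1 has only finitely many solutions (x, y) with both x and y S-units of K. -/
section Pade

open Polynomial

def padeCoef (N : ℕ) (r : ℤ) (k : ℕ) : ℤ :=
  (-1) ^ k * ((3 * N).choose k : ℤ) * Ring.choose ((k : ℤ) - r) N

def padeBCoef (N : ℕ) (r : ℤ) (i : ℕ) : ℤ :=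
  (-1) ^ i * ((3 * N).choose i : ℤ) * Ring.choose (-r) (N - i)

noncomputable def padeC (N : ℕ) (r : ℤ) : ℤ[X] :=
  ∑ k ∈ Finset.range (N + 1), C (padeCoef N r k) * X ^ k

noncomputable def padeA (N : ℕ) (r : ℤ) : ℤ[X] :=
  ∑ k ∈ Finset.range (N + 1), C (- padeCoef N r (2 * N + k)) * X ^ k

noncomputable def padeB (N : ℕ) (r : ℤ) : ℤ[X] :=
  ∑ i ∈ Finset.range (N + 1), C (padeBCoef N r i) * (X ^ i * (1 - X) ^ (N - i))

lemma sum_choose_choose (M i : ℕ) (hi : i ≤ M) :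
    ∑ k ∈ Finset.range (M + 1), (C ((-1) ^ k * (M.choose k : ℤ) * (k.choose i : ℤ)) * X ^ k : ℤ[X])
      = C ((-1) ^ i * (M.choose i : ℤ)) * (X ^ i * (1 - X) ^ (M - i)) := by
  obtain ⟨d, rfl⟩ := Nat.exists_eq_add_of_le hi
  rw [show i + d + 1 = i + (d + 1) by ring, Finset.sum_range_add]
  rw [Finset.sum_eq_zero, zero_add]
  · rw [show i + d - i = d by omega, show (1 - X : ℤ[X]) = (-X) + 1 by ring, add_pow,
      Finset.mul_sum, Finset.mul_sum]
    refine Finset.sum_congr rfl fun k hk => ?_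
    have hk : k ≤ d := by simpa [Nat.lt_succ_iff] using hk
    have h := Nat.choose_mul (n := i + d) (k := i + k) (s := i) (by omega)
    have h' : (((i + d).choose (i + k) : ℤ) * ((i + k).choose i : ℤ)) =
        ((i + d).choose i : ℤ) * (d.choose k : ℤ) := by
      rw [show i + d - i = d by omega, show i + k - i = k by omega] at h
      exact_mod_cast h
    rw [mul_assoc, h']
    have : (-X : ℤ[X]) ^ k = C ((-1) ^ k) * X ^ k := by
      rw [neg_pow]; simp
    rw [this]
    simp only [map_mul, map_pow, map_neg, map_one, map_natCast, pow_add]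
    ring
  · intro k hk
    rw [Nat.choose_eq_zero_of_lt (Finset.mem_range.mp hk)]
    simp

lemma pade_full (N : ℕ) (r : ℤ) :
    ∑ k ∈ Finset.range (3 * N + 1), (C (padeCoef N r k) * X ^ k : ℤ[X])
      = padeB N r * (1 - X) ^ (2 * N) := by
  have h1 : ∀ k : ℕ, padeCoef N r k = ∑ i ∈ Finset.range (N + 1),
      Ring.choose (-r) (N - i) * ((-1) ^ k * ((3 * N).choose k : ℤ) * (k.choose i : ℤ)) := by
    intro k
    rw [padeCoef, sub_eq_add_neg, Ring.add_choose_eq _ (Commute.all _ _),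
      Finset.Nat.sum_antidiagonal_eq_sum_range_succ
        (fun a b => Ring.choose (k : ℤ) a * Ring.choose (-r) b), Finset.mul_sum]
    refine Finset.sum_congr rfl fun i _ => ?_
    rw [Ring.choose_natCast]; ring
  simp_rw [h1, map_sum, Finset.sum_mul]
  rw [Finset.sum_comm, padeB, Finset.sum_mul]
  refine Finset.sum_congr rfl fun i hi => ?_
  have hi : i ≤ N := by simpa [Nat.lt_succ_iff] using hi
  simp_rw [C_mul (a := Ring.choose (-r) (N - i)), mul_assoc (C (Ring.choose (-r) (N - i)))]
  rw [← Finset.mul_sum, sum_choose_choose _ _ (by omega), padeBCoef,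
    show 3 * N - i = (N - i) + 2 * N by omega, pow_add, C_mul]
  rw [C_mul (b := Ring.choose (-r) (N - i))]
  simp only [C_mul]
  ring

lemma padeCoef_zero (N : ℕ) (r : ℕ) (k : ℕ) (h1 : r ≤ k) (h2 : k < r + N) :
    padeCoef N r k = 0 := by
  rw [padeCoef, show (k : ℤ) - (r : ℤ) = ((k - r : ℕ) : ℤ) by push_cast [h1]; ring, Ring.choose_natCast,
    Nat.choose_eq_zero_of_lt (show k - r < N by omega)]
  simp

lemma pade_identity (N : ℕ) (hN : 1 ≤ N) (r : ℕ) (hr1 : N ≤ r) (hr2 : r ≤ N + 1) :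
    padeA N r * X ^ (2 * N) + padeB N r * (1 - X) ^ (2 * N) = padeC N r := by
  rw [← pade_full, show 3 * N + 1 = 2 * N + (N + 1) by ring, Finset.sum_range_add,
    show 2 * N = (N + 1) + (N - 1) by omega, Finset.sum_range_add,
    show (N + 1) + (N - 1) = 2 * N by omega]
  rw [Finset.sum_eq_zero (s := Finset.range (N - 1)), padeA, padeC, Finset.sum_mul]
  · have h : ∑ k ∈ Finset.range (N + 1), (C (- padeCoef N r (2 * N + k)) * X ^ k * X ^ (2 * N)
        + C (padeCoef N r (2 * N + k)) * X ^ (2 * N + k) : ℤ[X]) = 0 := by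
      refine Finset.sum_eq_zero fun k _ => ?_
      rw [pow_add, C_neg]; ring
    rw [Finset.sum_add_distrib] at h
    linear_combination h
  · intro k hk
    have := Finset.mem_range.mp hk
    rw [padeCoef_zero N r _ (by omega) (by omega)]
    simp

lemma natDegree_sum_le' (N : ℕ) (s : ℕ → ℤ) :
    (∑ k ∈ Finset.range (N + 1), (C (s k) * X ^ k : ℤ[X])).natDegree ≤ N := by
  refine natDegree_sum_le_of_forall_le _ _ fun k hk => ?_
  have := Finset.mem_range.mp hk
  exact (natDegree_C_mul_X_pow_le _ _).trans (by omega)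

lemma eval_zero_sum (N : ℕ) (s : ℕ → ℤ) :
    (∑ k ∈ Finset.range (N + 1), (C (s k) * X ^ k : ℤ[X])).eval 0 = s 0 := by
  rw [Finset.sum_range_succ']
  simp [eval_finsetSum]

lemma pade_det (N : ℕ) (hN : 1 ≤ N) :
    ∃ c : ℤ, c ≠ 0 ∧ padeA N (N + 1 : ℕ) * padeB N N - padeA N N * padeB N (N + 1 : ℕ) = C c := by
  set D := padeA N (N + 1 : ℕ) * padeB N N - padeA N N * padeB N (N + 1 : ℕ) with hD
  have i1 := pade_identity N hN (N + 1) (by omega) le_rfl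
  have i2 := pade_identity N hN N le_rfl (by omega)
  have key : (1 - X) ^ (2 * N) * D =
      padeA N (N + 1 : ℕ) * padeC N N - padeA N N * padeC N (N + 1 : ℕ) := by
    rw [← i1, ← i2, hD]; ring
  have hev : D.eval 0 ≠ 0 := by
    have h := congrArg (eval 0) key
    have hA1 : (padeA N (N + 1 : ℕ)).eval 0 = 0 := by
      rw [padeA, eval_zero_sum, padeCoef_zero _ _ _ (by omega) (by omega), neg_zero]
    have hA2 : (padeA N N).eval 0 ≠ 0 := by
      rw [padeA, eval_zero_sum, padeCoef, neg_ne_zero,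
        show ((2 * N + 0 : ℕ) : ℤ) - N = ((N : ℕ) : ℤ) by push_cast; ring, Ring.choose_natCast]
      have : (3 * N).choose (2 * N + 0) ≠ 0 := (Nat.choose_pos (by omega)).ne'
      simp; exact_mod_cast this
    have hC1 : (padeC N (N + 1 : ℕ)).eval 0 ≠ 0 := by
      rw [padeC, eval_zero_sum, padeCoef, Nat.cast_zero, zero_sub, Ring.choose_neg,
        show (((N + 1 : ℕ) : ℤ) + N - 1) = ((2 * N : ℕ) : ℤ) by push_cast; ring,
        Ring.choose_natCast]
      have : (2 * N).choose N ≠ 0 := (Nat.choose_pos (by omega)).ne'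
      simp [Units.smul_def]
      exact_mod_cast this
    simp only [eval_mul, eval_pow, eval_sub, eval_one, eval_X, sub_zero, one_pow, one_mul,
      hA1, zero_mul, zero_sub] at h
    rw [h]
    exact neg_ne_zero.mpr (mul_ne_zero hA2 hC1)
  have hD0 : D ≠ 0 := by rintro h; simp [h] at hev
  have hdeg : D.natDegree = 0 := by
    have h1 : ((1 - X : ℤ[X]) ^ (2 * N) * D).natDegree = 2 * N + D.natDegree := by
      have : (1 - X : ℤ[X]).natDegree = 1 := by
        rw [show (1 - X : ℤ[X]) = -(X - C 1) by simp, natDegree_neg, natDegree_X_sub_C]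
      have hne : (1 - X : ℤ[X]) ≠ 0 := by rintro h; simp [h] at this
      rw [natDegree_mul (pow_ne_zero _ hne) hD0, natDegree_pow, this, mul_one]
    have h2 : (padeA N (N + 1 : ℕ) * padeC N N - padeA N N * padeC N (N + 1 : ℕ)).natDegree
        ≤ 2 * N := by
      refine (natDegree_sub_le _ _).trans (max_le ?_ ?_) <;>
      · refine natDegree_mul_le.trans ?_
        have := natDegree_sum_le' N
        rw [two_mul]
        exact add_le_add (this _) (this _)
    rw [← key, h1] at h2
    omega
  refine ⟨D.coeff 0, ?_, eq_C_of_natDegree_eq_zero hdeg⟩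
  rwa [coeff_zero_eq_eval_zero]

lemma abs_choose_le (z : ℤ) (n m : ℕ) (h1 : -(m : ℤ) ≤ z) (h2 : z ≤ n + m) :
    |Ring.choose z n| ≤ 2 ^ (n + m) := by
  rcases le_or_gt 0 z with h | h
  · lift z to ℕ using h
    rw [Ring.choose_natCast]
    have h3 : z.choose n ≤ 2 ^ (n + m) :=
      (Nat.choose_le_two_pow z n).trans (Nat.pow_le_pow_right (by norm_num) (by omega))
    rw [Nat.abs_cast]
    exact_mod_cast h3
  · obtain ⟨w, rfl⟩ : ∃ w : ℕ, z = -((w : ℤ) + 1) := ⟨(-z - 1).toNat, by omega⟩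
    rw [Ring.choose_neg, show ((w : ℤ) + 1 + n - 1) = ((w + n : ℕ) : ℤ) by push_cast; ring,
      Ring.choose_natCast]
    have h3 : (w + n).choose n ≤ 2 ^ (n + m) :=
      (Nat.choose_le_two_pow _ n).trans (Nat.pow_le_pow_right (by norm_num) (by omega))
    rw [Units.smul_def, smul_eq_mul, abs_mul, Int.isUnit_iff_abs_eq.mp (Units.isUnit _), one_mul,
      Nat.abs_cast]
    exact_mod_cast h3

lemma abs_padeCoef_le (N r k : ℕ) (hr1 : N ≤ r) (hr2 : r ≤ N + 1) (hk : k ≤ 3 * N) (hN : 1 ≤ N) :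
    |padeCoef N r k| ≤ 128 ^ N := by
  have h1 := abs_choose_le ((k : ℤ) - r) N (2 * N) (by push_cast; omega) (by push_cast; omega)
  have h2 : ((3 * N).choose k : ℤ) ≤ 2 ^ (3 * N) := by exact_mod_cast Nat.choose_le_two_pow _ _
  rw [padeCoef, abs_mul, abs_mul, abs_pow, abs_neg, abs_one, one_pow, one_mul, Nat.abs_cast]
  calc _ ≤ (2 : ℤ) ^ (3 * N) * 2 ^ (N + 2 * N) := by gcongr
    _ = 64 ^ N := by rw [show N + 2 * N = 3 * N by ring, ← pow_add, ← two_mul,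
                      show 2 * (3 * N) = 6 * N by ring, pow_mul]; norm_num
    _ ≤ 128 ^ N := by gcongr; norm_num

lemma abs_padeBCoef_le (N r i : ℕ) (hr1 : N ≤ r) (hr2 : r ≤ N + 1) (hN : 1 ≤ N) :
    |padeBCoef N r i| ≤ 128 ^ N := by
  have h1 := abs_choose_le (-(r : ℤ)) (N - i) (2 * N) (by push_cast; omega) (by push_cast; omega)
  have h2 : ((3 * N).choose i : ℤ) ≤ 2 ^ (3 * N) := by exact_mod_cast Nat.choose_le_two_pow _ _
  have h3 : (2 : ℤ) ^ (N - i + 2 * N) ≤ 2 ^ (N + 2 * N) :=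
    pow_le_pow_right₀ (by norm_num) (by omega)
  rw [padeBCoef, abs_mul, abs_mul, abs_pow, abs_neg, abs_one, one_pow, one_mul, Nat.abs_cast]
  calc _ ≤ (2 : ℤ) ^ (3 * N) * 2 ^ (N + 2 * N) := by gcongr; exact h1.trans h3
    _ = 64 ^ N := by rw [show N + 2 * N = 3 * N by ring, ← pow_add, ← two_mul,
                      show 2 * (3 * N) = 6 * N by ring, pow_mul]; norm_num
    _ ≤ 128 ^ N := by gcongr; norm_num

section
variable {F : Type*} [Field F]

/-- bounded size and integrality of a value. -/
def PadeGood (N : ℕ) (x y a : F) : Prop :=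
  (∀ f : AbsoluteValue F ℝ, f a ≤ 256 ^ N * (max (max (f x) (f y)) 1) ^ N) ∧
  ∀ O : Subring F, x ∈ O → y ∈ O → a ∈ O

lemma abv_int_le (f : AbsoluteValue F ℝ) (n : ℤ) : f (n : F) ≤ |(n : ℝ)| := by
  have h : ∀ m : ℕ, f (m : F) ≤ m := by
    intro m
    induction m with
    | zero => simp
    | succ k ih =>
      push_cast
      exact (f.add_le _ _).trans (by rw [f.map_one]; linarith)
  rcases Int.eq_nat_or_neg n with ⟨m, rfl | rfl⟩
  · simpa using h m
  · simpa using h m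

lemma padeGood_sum (N : ℕ) (x y : F) (s : ℕ → ℤ) (e : ℕ → ℕ) (hs : ∀ k ≤ N, |s k| ≤ 128 ^ N)
    (he : ∀ k ≤ N, k + e k ≤ N) :
    PadeGood N x y (∑ k ∈ Finset.range (N + 1), (s k : F) * (x ^ k * y ^ e k)) := by
  constructor
  · intro f
    set B := max (max (f x) (f y)) 1 with hB
    have hx : f x ≤ B := (le_max_left _ _).trans (le_max_left _ _)
    have hy : f y ≤ B := (le_max_right _ _).trans (le_max_left _ _)
    have h1 : 1 ≤ B := le_max_right _ _
    calc _ ≤ ∑ k ∈ Finset.range (N + 1), f ((s k : F) * (x ^ k * y ^ e k)) := f.sum_le _ _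
      _ ≤ ∑ k ∈ Finset.range (N + 1), 128 ^ N * B ^ N := by
        refine Finset.sum_le_sum fun k hk => ?_
        have hk : k ≤ N := by simpa [Nat.lt_succ_iff] using hk
        rw [map_mul, map_mul, map_pow, map_pow]
        have h2 : |(s k : ℝ)| ≤ 128 ^ N := by exact_mod_cast hs k hk
        have h3 : f x ^ k * f y ^ e k ≤ B ^ N := by
          calc _ ≤ B ^ k * B ^ e k := by gcongr
            _ = B ^ (k + e k) := by rw [pow_add]
            _ ≤ B ^ N := pow_le_pow_right₀ h1 (he k hk)
        exact mul_le_mul ((abv_int_le f _).trans h2) h3 (by positivity) (by positivity)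
      _ = (N + 1) * (128 ^ N * B ^ N) := by simp
      _ ≤ 2 ^ N * (128 ^ N * B ^ N) := by
        gcongr
        exact_mod_cast Nat.succ_le_of_lt Nat.lt_two_pow_self
      _ = _ := by rw [← mul_assoc, ← mul_pow]; norm_num
  · intro O hx hy
    exact sum_mem fun k _ => mul_mem (intCast_mem O _) (mul_mem (pow_mem hx _) (pow_mem hy _))

lemma pade_values [CharZero F] (N : ℕ) (hN : 1 ≤ N) (x y : F) (hxy : x + y = 1) :
    ∃ A₁ B₁ C₁ A₂ B₂ C₂ : F, A₁ * x ^ (2 * N) + B₁ * y ^ (2 * N) = C₁ ∧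
      A₂ * x ^ (2 * N) + B₂ * y ^ (2 * N) = C₂ ∧ A₁ * B₂ - A₂ * B₁ ≠ 0 ∧
      PadeGood N x y A₁ ∧ PadeGood N x y B₁ ∧ PadeGood N x y C₁ ∧
      PadeGood N x y A₂ ∧ PadeGood N x y B₂ ∧ PadeGood N x y C₂ := by
  have hy : y = 1 - x := by linear_combination hxy
  have id : ∀ r : ℕ, N ≤ r → r ≤ N + 1 → aeval x (padeA N r) * x ^ (2 * N) +
      aeval x (padeB N r) * y ^ (2 * N) = aeval x (padeC N r) := by
    intro r h1 h2
    have := congrArg (aeval x) (pade_identity N hN r h1 h2)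
    simpa [hy] using this
  have gA : ∀ r : ℕ, N ≤ r → r ≤ N + 1 → PadeGood N x y (aeval x (padeA N r)) := by
    intro r h1 h2
    have := padeGood_sum N x y (fun k => - padeCoef N r (2 * N + k)) (fun _ => 0)
      (fun k hk => by rw [abs_neg]; exact abs_padeCoef_le N r _ h1 h2 (by omega) hN)
      (fun k hk => by omega)
    simpa [padeA] using this
  have gC : ∀ r : ℕ, N ≤ r → r ≤ N + 1 → PadeGood N x y (aeval x (padeC N r)) := by
    intro r h1 h2
    have := padeGood_sum N x y (fun k => padeCoef N r k) (fun _ => 0)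
      (fun k hk => abs_padeCoef_le N r _ h1 h2 (by omega) hN)
      (fun k hk => by omega)
    simpa [padeC] using this
  have gB : ∀ r : ℕ, N ≤ r → r ≤ N + 1 → PadeGood N x y (aeval x (padeB N r)) := by
    intro r h1 h2
    have := padeGood_sum N x y (fun k => padeBCoef N r k) (fun k => N - k)
      (fun k hk => abs_padeBCoef_le N r _ h1 h2 hN)
      (fun k hk => by omega)
    simpa [padeB, hy] using this
  obtain ⟨c, hc, hdet⟩ := pade_det N hN
  refine ⟨_, _, _, _, _, _, id (N + 1) (by omega) le_rfl, id N le_rfl (by omega), ?_,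
    gA _ (by omega) le_rfl, gB _ (by omega) le_rfl, gC _ (by omega) le_rfl,
    gA _ le_rfl (by omega), gB _ le_rfl (by omega), gC _ le_rfl (by omega)⟩
  have := congrArg (aeval x) hdet
  rw [map_sub, map_mul, map_mul] at this
  rw [this]
  simpa using hc
end

end Pade

set_option linter.unusedSectionVars false

section Abstract

variable {F : Type*} [Field F] {ι : Type*} [Fintype ι]
  (f : ι → AbsoluteValue F ℝ) (m : ι → ℕ) (O : Subring F)

/-- local contribution to the height of a pair. -/
noncomputable def locHt (v : ι) (x y : F) : ℝ :=
  m v * Real.log (max (max (f v x) (f v y)) 1)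

/-- the height of a pair. -/
noncomputable def pairHt (x y : F) : ℝ := ∑ v, locHt f m v x y

/-- the logarithmic vector of a pair. -/
noncomputable def logVec (x y : F) : (ι → ℝ) × (ι → ℝ) :=
  (fun v => m v * Real.log (f v x), fun v => m v * Real.log (f v y))

/-- units of the subring, as elements of the field. -/
def IsU (x : F) : Prop := x ≠ 0 ∧ x ∈ O ∧ x⁻¹ ∈ O

lemma locHt_nonneg (v : ι) (x y : F) : 0 ≤ locHt f m v x y :=
  mul_nonneg (Nat.cast_nonneg _) (Real.log_nonneg (le_max_right _ _))

lemma local_ineq (v : ι) (N : ℕ) (x y a b A B C D : F) (hD : D ≠ 0)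
    (h1 : x ^ (2 * N) * D = B - b * C) (h2 : y ^ (2 * N) * D = a * C - A)
    (h3 : D = a * B - b * A) (hN : 1 ≤ N)
    (gA : PadeGood N x y A) (gB : PadeGood N x y B) (gC : PadeGood N x y C) :
    N * locHt f m v x y + m v * Real.log (f v D) ≤ locHt f m v a b + N * (m v * Real.log 512) := by
  set g := f v
  set h := max (max (g x) (g y)) 1 with hh
  set k := max (max (g a) (g b)) 1 with hk
  have h1' : 1 ≤ h := le_max_right _ _
  have k1' : 1 ≤ k := le_max_right _ _
  have ka : g a ≤ k := (le_max_left _ _).trans (le_max_left _ _)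
  have kb : g b ≤ k := (le_max_right _ _).trans (le_max_left _ _)
  have hgD : 0 < g D := g.pos hD
  set E : ℝ := 256 ^ N * h ^ N with hE
  have hE0 : 0 ≤ E := by positivity
  have eA : g A ≤ E := gA.1 g
  have eB : g B ≤ E := gB.1 g
  have eC : g C ≤ E := gC.1 g
  have sub : ∀ s t : F, g (s - t) ≤ g s + g t := fun s t => by
    have := g.add_le s (-t)
    rwa [g.map_neg, ← sub_eq_add_neg] at this
  have m1 : ∀ s t : F, g s ≤ k → g t ≤ E → g (s * t) ≤ k * E := fun s t hs ht => by
    rw [map_mul]; gcongr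
  have m2 : ∀ t : F, g t ≤ E → g t ≤ k * E := fun t ht =>
    ht.trans (le_mul_of_one_le_left hE0 k1')
  have b1 : g x ^ (2 * N) * g D ≤ 2 * (k * E) := by
    rw [← map_pow, ← map_mul, h1]
    linarith [sub B (b * C), m2 B eB, m1 b C kb eC]
  have b2 : g y ^ (2 * N) * g D ≤ 2 * (k * E) := by
    rw [← map_pow, ← map_mul, h2]
    linarith [sub (a * C) A, m2 A eA, m1 a C ka eC]
  have b3 : 1 ^ (2 * N) * g D ≤ 2 * (k * E) := by
    rw [one_pow, one_mul]
    have : g D ≤ g (a * B) + g (b * A) := by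
      conv_lhs => rw [h3]
      exact sub _ _
    linarith [m1 a B ka eB, m1 b A kb eA]
  have b4 : h ^ (2 * N) * g D ≤ 2 * (k * E) := by
    rcases max_choice (max (g x) (g y)) 1 with e | e
    · rcases max_choice (g x) (g y) with e' | e'
      · rw [hh, e, e']; exact b1
      · rw [hh, e, e']; exact b2
    · rw [hh, e]; exact b3
  have b5 : h ^ N * g D ≤ 512 ^ N * k := by
    have hp : 0 < h ^ N := by positivity
    have h2N : (2 : ℝ) ≤ 2 ^ N := by
      calc (2 : ℝ) = 2 ^ 1 := by norm_num
        _ ≤ 2 ^ N := pow_le_pow_right₀ (by norm_num) hN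
    have : h ^ N * (h ^ N * g D) ≤ h ^ N * (512 ^ N * k) := by
      calc h ^ N * (h ^ N * g D) = h ^ (2 * N) * g D := by ring
        _ ≤ 2 * (k * E) := b4
        _ ≤ 2 ^ N * (k * E) := by gcongr
        _ = h ^ N * ((2 ^ N * 256 ^ N) * k) := by rw [hE]; ring
        _ = _ := by rw [← mul_pow]; norm_num
    exact le_of_mul_le_mul_left this hp
  have b6 := Real.log_le_log (by positivity) b5
  rw [Real.log_mul (by positivity) (by positivity), Real.log_mul (by positivity) (by positivity),
    Real.log_pow, Real.log_pow] at b6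
  have b7 := mul_le_mul_of_nonneg_left b6 (Nat.cast_nonneg (α := ℝ) (m v))
  simp only [locHt]
  change N * (m v * Real.log h) + _ ≤ m v * Real.log k + _
  linarith

lemma sum_log_nonneg
    (hprod : ∀ D ∈ O, D ≠ 0 → 1 ≤ ∏ v, f v D ^ m v)
    (D : F) (hD : D ∈ O) (hD0 : D ≠ 0) :
    0 ≤ ∑ v, m v * Real.log (f v D) := by
  have h := Real.log_nonneg (hprod D hD hD0)
  rw [Real.log_prod (fun v _ => pow_ne_zero _ ((f v).pos hD0).ne')] at h
  simpa [Real.log_pow] using h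

lemma IsU.pow_div {O : Subring F} {x X : F} (hx : IsU O x) (hX : IsU O X) (n : ℕ) :
    X / x ^ n ∈ O := by
  rw [div_eq_mul_inv, ← inv_pow]
  exact mul_mem hX.2.1 (pow_mem hx.2.2 _)

lemma key_ineq
    (hprod : ∀ D ∈ O, D ≠ 0 → 1 ≤ ∏ v, f v D ^ m v)
    [CharZero F] (N : ℕ) (hN : 1 ≤ N) (x y X Y : F) (hx : IsU O x) (hy : IsU O y)
    (hX : IsU O X) (hY : IsU O Y) (hxy : x + y = 1) (hXY : X + Y = 1) :
    N * pairHt f m x y ≤ pairHt f m (X / x ^ (2 * N)) (Y / y ^ (2 * N))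
      + N * ∑ v, m v * Real.log 512 := by
  have ha := hx.pow_div hX (2 * N)
  have hb := hy.pow_div hY (2 * N)
  set a := X / x ^ (2 * N) with hadef
  set b := Y / y ^ (2 * N) with hbdef
  have hxp : x ^ (2 * N) ≠ 0 := pow_ne_zero _ hx.1
  have hyp : y ^ (2 * N) ≠ 0 := pow_ne_zero _ hy.1
  have ha0 : a ≠ 0 := div_ne_zero hX.1 hxp
  have hab : a * x ^ (2 * N) + b * y ^ (2 * N) = 1 := by
    rw [hadef, hbdef, div_mul_cancel₀ _ hxp, div_mul_cancel₀ _ hyp, hXY]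
  have main : ∀ A B C : F, A * x ^ (2 * N) + B * y ^ (2 * N) = C → a * B - b * A ≠ 0 →
      PadeGood N x y A → PadeGood N x y B → PadeGood N x y C →
      N * pairHt f m x y ≤ pairHt f m a b + N * ∑ v, m v * Real.log 512 := by
    intro A B C hC hD gA gB gC
    have hDO : a * B - b * A ∈ O :=
      sub_mem (mul_mem ha (gB.2 O hx.2.1 hy.2.1)) (mul_mem hb (gA.2 O hx.2.1 hy.2.1))
    have h0 := sum_log_nonneg f m O hprod _ hDO hD
    have hs := Finset.sum_le_sum fun v (_ : v ∈ Finset.univ) =>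
      local_ineq f m v N x y a b A B C _ hD
        (by linear_combination B * hab - b * hC)
        (by linear_combination a * hC - A * hab) rfl hN gA gB gC
    rw [Finset.sum_add_distrib, Finset.sum_add_distrib, ← Finset.mul_sum, ← Finset.mul_sum] at hs
    simp only [pairHt]
    linarith
  obtain ⟨A₁, B₁, C₁, A₂, B₂, C₂, e1, e2, hdet, gA1, gB1, gC1, gA2, gB2, gC2⟩ :=
    pade_values N hN x y hxy
  by_cases hD1 : a * B₁ - b * A₁ = 0
  · by_cases hD2 : a * B₂ - b * A₂ = 0
    · exfalso
      have : a * (A₁ * B₂ - A₂ * B₁) = 0 := by linear_combination A₁ * hD2 - A₂ * hD1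
      exact (mul_ne_zero ha0 hdet) this
    · exact main A₂ B₂ C₂ e2 hD2 gA2 gB2 gC2
  · exact main A₁ B₁ C₁ e1 hD1 gA1 gB1 gC1

lemma abs_log_le
    (hprod : ∀ D ∈ O, D ≠ 0 → 1 ≤ ∏ v, f v D ^ m v)
    (x : F) (hx : IsU O x) (μ : ι → ℝ) (hμ0 : ∀ v, 0 ≤ μ v)
    (hμ : ∀ v, m v * Real.log (f v x) ≤ μ v) (v : ι) :
    |m v * Real.log (f v x)| ≤ ∑ w, μ w := by
  classical
  have h1 : μ v ≤ ∑ w, μ w := Finset.single_le_sum (fun w _ => hμ0 w) (Finset.mem_univ v)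
  rw [abs_le]
  refine ⟨?_, (hμ v).trans h1⟩
  have h0 := sum_log_nonneg f m O hprod x hx.2.1 hx.1
  rw [← Finset.add_sum_erase _ _ (Finset.mem_univ v)] at h0
  have h2 : ∑ w ∈ Finset.univ.erase v, m w * Real.log (f w x) ≤ ∑ w, μ w :=
    (Finset.sum_le_sum fun w _ => hμ w).trans
      (Finset.sum_le_sum_of_subset_of_nonneg (Finset.erase_subset _ _) fun w _ _ => hμ0 w)
  linarith

lemma norm_logVec_le
    (hprod : ∀ D ∈ O, D ≠ 0 → 1 ≤ ∏ v, f v D ^ m v)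
    (x y : F) (hx : IsU O x) (hy : IsU O y) :
    ‖logVec f m x y‖ ≤ pairHt f m x y := by
  have h0 : 0 ≤ pairHt f m x y := Finset.sum_nonneg fun v _ => locHt_nonneg f m v x y
  rw [Prod.norm_def]
  refine max_le ?_ ?_
  · refine (pi_norm_le_iff_of_nonneg h0).mpr fun v => ?_
    refine abs_log_le f m O hprod x hx _ (fun v => locHt_nonneg f m v x y) (fun v => ?_) v
    refine mul_le_mul_of_nonneg_left (Real.log_le_log ((f v).pos hx.1) ?_) (Nat.cast_nonneg _)
    exact (le_max_left _ _).trans (le_max_left _ _)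
  · refine (pi_norm_le_iff_of_nonneg h0).mpr fun v => ?_
    refine abs_log_le f m O hprod y hy _ (fun v => locHt_nonneg f m v x y) (fun v => ?_) v
    refine mul_le_mul_of_nonneg_left (Real.log_le_log ((f v).pos hy.1) ?_) (Nat.cast_nonneg _)
    exact (le_max_right _ _).trans (le_max_left _ _)

lemma log_fst_le (x y : F) (v : ι) : |m v * Real.log (f v x)| ≤ ‖logVec f m x y‖ :=
  (norm_le_pi_norm (logVec f m x y).1 v).trans (norm_fst_le _)

lemma log_snd_le (x y : F) (v : ι) : |m v * Real.log (f v y)| ≤ ‖logVec f m x y‖ :=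
  (norm_le_pi_norm (logVec f m x y).2 v).trans (norm_snd_le _)

lemma pairHt_le (x y : F) :
    pairHt f m x y ≤ Fintype.card ι * ‖logVec f m x y‖ := by
  have : ∀ v ∈ Finset.univ, locHt f m v x y ≤ ‖logVec f m x y‖ := by
    intro v _
    rw [locHt]
    rcases max_choice (max (f v x) (f v y)) 1 with e | e
    · rcases max_choice (f v x) (f v y) with e' | e'
      · rw [e, e']; exact (le_abs_self _).trans (log_fst_le f m x y v)
      · rw [e, e']; exact (le_abs_self _).trans (log_snd_le f m x y v)
    · rw [e]; simp
  have h := Finset.sum_le_card_nsmul _ _ _ this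
  rw [nsmul_eq_mul] at h
  exact h

lemma logVec_div (x y X Y : F) (hx : x ≠ 0) (hy : y ≠ 0) (hX : X ≠ 0) (hY : Y ≠ 0) (n : ℕ) :
    logVec f m (X / x ^ n) (Y / y ^ n) = logVec f m X Y - (n : ℝ) • logVec f m x y := by
  have h : ∀ v, ∀ z Z : F, z ≠ 0 → Z ≠ 0 → (m v : ℝ) * Real.log (f v (Z / z ^ n)) =
      m v * Real.log (f v Z) - n * (m v * Real.log (f v z)) := by
    intro v z Z hz hZ
    rw [map_div₀, map_pow, Real.log_div ((f v).pos hZ).ne' (pow_ne_zero _ ((f v).pos hz).ne'),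
      Real.log_pow]
    ring
  ext v
  · exact h v x X hx hX
  · exact h v y Y hy hY

theorem abstract_finite
    (hprod : ∀ D ∈ O, D ≠ 0 → 1 ≤ ∏ v, f v D ^ m v)
    [CharZero F] (hm : ∀ v, 1 ≤ m v)
    (hN : ∀ R : ℝ, {x : F | IsU O x ∧ ∀ v, f v x ≤ R}.Finite) :
    {p : F × F | IsU O p.1 ∧ IsU O p.2 ∧ p.1 + p.2 = 1}.Finite := by
  by_contra hinf
  set Sol := {p : F × F | IsU O p.1 ∧ IsU O p.2 ∧ p.1 + p.2 = 1} with hSol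
  have hinf : Sol.Infinite := hinf
  let u : F × F → (ι → ℝ) × (ι → ℝ) := fun p => logVec f m p.1 p.2
  -- Northcott
  have north : ∀ R : ℝ, {p ∈ Sol | ‖u p‖ ≤ R}.Finite := by
    intro R
    have hb : ∀ v, ∀ z : F, z ≠ 0 → |m v * Real.log (f v z)| ≤ R → f v z ≤ Real.exp R := by
      intro v z hz h
      rw [← Real.log_le_iff_le_exp ((f v).pos hz)]
      have h1 : (1 : ℝ) ≤ m v := by exact_mod_cast hm v
      rcases le_or_gt 0 (Real.log (f v z)) with h0 | h0
      · calc _ ≤ m v * Real.log (f v z) := le_mul_of_one_le_left h0 h1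
          _ ≤ R := (le_abs_self _).trans h
      · exact h0.le.trans ((abs_nonneg _).trans h)
    refine ((hN (Real.exp R)).prod (hN (Real.exp R))).subset ?_
    rintro ⟨x, y⟩ ⟨⟨hx, hy, -⟩, hu⟩
    exact ⟨⟨hx, fun v => hb v x hx.1 ((log_fst_le f m x y v).trans hu)⟩,
      ⟨hy, fun v => hb v y hy.1 ((log_snd_le f m x y v).trans hu)⟩⟩
  set t : ℝ := (Fintype.card ι : ℝ) with ht
  have ht0 : 0 ≤ t := Nat.cast_nonneg _
  set Cst : ℝ := ∑ v, m v * Real.log 512 with hCst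
  have hC0 : 0 ≤ Cst := Finset.sum_nonneg fun v _ =>
    mul_nonneg (Nat.cast_nonneg _) (Real.log_nonneg (by norm_num))
  set ε : ℝ := 1 / (8 * (t + 1)) with hε
  have hε0 : 0 < ε := by positivity
  let d : F × F → (ι → ℝ) × (ι → ℝ) := fun p => ‖u p‖⁻¹ • u p
  have hd : ∀ p, d p ∈ Metric.closedBall (0 : (ι → ℝ) × (ι → ℝ)) 1 := by
    intro p
    rw [mem_closedBall_zero_iff, norm_smul, norm_inv, norm_norm]
    exact inv_mul_le_one
  -- pigeonhole
  obtain ⟨c, hc⟩ : ∃ c, {p ∈ Sol | d p ∈ Metric.ball c (ε / 2)}.Infinite := by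
    obtain ⟨T, -, hT, hcov⟩ := (isCompact_closedBall (0 : (ι → ℝ) × (ι → ℝ)) 1).finite_cover_balls
      (half_pos hε0)
    by_contra! hcon
    refine hinf ((hT.biUnion (t := fun c => {p ∈ Sol | d p ∈ Metric.ball c (ε / 2)})
      (fun c _ => Set.not_infinite.mp (by simpa using hcon c))).subset ?_)
    intro p hp
    obtain ⟨c, hcT, hpc⟩ := Set.mem_iUnion₂.mp (hcov (hd p))
    exact Set.mem_iUnion₂.mpr ⟨c, hcT, hp, hpc⟩
  have big : ∀ R : ℝ, ∃ p ∈ {p ∈ Sol | d p ∈ Metric.ball c (ε / 2)}, R < ‖u p‖ := by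
    intro R
    obtain ⟨p, hp, hp'⟩ := (hc.sdiff (north R)).nonempty
    refine ⟨p, hp, ?_⟩
    by_contra! h
    exact hp' ⟨hp.1, h⟩
  obtain ⟨p, ⟨hpS, hpd⟩, hpR⟩ := big (4 * Cst + 1)
  set ρ := ‖u p‖ with hρ
  have hρ0 : 0 < ρ := by linarith
  obtain ⟨q, ⟨hqS, hqd⟩, hqR⟩ := big (2 * ρ * (8 * t + 2))
  set ρ' := ‖u q‖ with hρ'
  have hρ'0 : 0 < ρ' := lt_of_le_of_lt (by positivity) hqR
  set N := ⌊ρ' / (2 * ρ)⌋₊ with hNdef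
  have hN1 : (N : ℝ) ≤ ρ' / (2 * ρ) := Nat.floor_le (by positivity)
  have hN2 : ρ' / (2 * ρ) < N + 1 := Nat.lt_floor_add_one _
  rw [le_div_iff₀ (by positivity)] at hN1
  rw [div_lt_iff₀ (by positivity)] at hN2
  have hNbig : 8 * t + 1 < N := by
    have : 2 * ρ * (8 * t + 2) < 2 * ρ * (N + 1) := by linarith
    have := lt_of_mul_lt_mul_left this (by positivity)
    linarith
  have hN1' : 1 ≤ N := by
    have : (1 : ℝ) < N := by linarith
    exact_mod_cast this.le
  have hdist : ‖d q - d p‖ ≤ ε := by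
    rw [← dist_eq_norm]
    have := dist_triangle_right (d q) (d p) c
    rw [Metric.mem_ball] at hpd hqd
    linarith
  have hup : u p = ρ • d p := by
    simp only [d]; rw [smul_smul, mul_inv_cancel₀ hρ0.ne', one_smul]
  have huq : u q = ρ' • d q := by
    simp only [d]; rw [smul_smul, mul_inv_cancel₀ hρ'0.ne', one_smul]
  have hnorm : ‖u q - ((2 * N : ℕ) : ℝ) • u p‖ ≤ ε * ρ' + 2 * ρ := by
    have e : u q - ((2 * N : ℕ) : ℝ) • u p = ρ' • (d q - d p) + (ρ' - 2 * N * ρ) • d p := by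
      rw [huq, hup]; push_cast; module
    rw [e]
    refine (norm_add_le _ _).trans (add_le_add ?_ ?_)
    · rw [norm_smul, Real.norm_eq_abs, abs_of_pos hρ'0, mul_comm]
      gcongr
    · rw [norm_smul, Real.norm_eq_abs]
      have h1 : |ρ' - 2 * N * ρ| ≤ 2 * ρ := by rw [abs_le]; constructor <;> linarith
      have h2 : ‖d p‖ ≤ 1 := by simpa using hd p
      calc _ ≤ 2 * ρ * 1 := by gcongr
        _ = 2 * ρ := mul_one _
  obtain ⟨hp1, hp2, hp3⟩ := hpS
  obtain ⟨hq1, hq2, hq3⟩ := hqS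
  have key := key_ineq f m O hprod N hN1' p.1 p.2 q.1 q.2 hp1 hp2 hq1 hq2 hp3 hq3
  have k1 := pairHt_le f m (q.1 / p.1 ^ (2 * N)) (q.2 / p.2 ^ (2 * N))
  rw [logVec_div f m _ _ _ _ hp1.1 hp2.1 hq1.1 hq2.1] at k1
  have k2 : ρ ≤ pairHt f m p.1 p.2 := norm_logVec_le f m O hprod p.1 p.2 hp1 hp2
  have k3 : N * ρ ≤ t * (ε * ρ' + 2 * ρ) + N * Cst := by
    calc (N : ℝ) * ρ ≤ N * pairHt f m p.1 p.2 := by gcongr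
      _ ≤ _ := key
      _ ≤ t * (ε * ρ' + 2 * ρ) + N * Cst := by
        gcongr
        exact k1.trans (by gcongr)
  have hNR : (1 : ℝ) ≤ N := by exact_mod_cast hN1'
  have k4 : t * (ε * ρ') ≤ N * ρ / 2 := by
    have e1 : t * ε ≤ 1 / 8 := by
      rw [hε, mul_one_div, div_le_div_iff₀ (by positivity) (by norm_num)]; linarith
    calc t * (ε * ρ') = (t * ε) * ρ' := by ring
      _ ≤ 1 / 8 * ((N + 1) * (2 * ρ)) := by gcongr
      _ ≤ 1 / 8 * ((N + N) * (2 * ρ)) := by gcongr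
      _ = _ := by ring
  have k5 : N * Cst ≤ N * (ρ / 4) := by gcongr; linarith
  have k6 : N * ρ ≤ (8 * t) * ρ := by linarith
  have k7 := le_of_mul_le_mul_right k6 hρ0
  linarith

end Abstract

section Final

open IsDedekindDomain NumberField

variable {K : Type*} [Field K] [NumberField K]

lemma finitePlace_le_one (w : FinitePlace K) (x : K)
    (h : w.maximalIdeal.valuation K x ≤ 1) : w x ≤ 1 := by
  rw [← FinitePlace.norm_embedding_eq, FinitePlace.norm_embedding, HeightOneSpectrum.adicAbv_def]
  have := (WithZeroMulInt.toNNReal_le_one_iff (m := w.maximalIdeal.valuation K x)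
    (HeightOneSpectrum.one_lt_absNorm_nnreal w.maximalIdeal)).mpr h
  exact_mod_cast this

/-- the places above `S`. -/
def placesOver (S : Set (HeightOneSpectrum (𝓞 K))) : Set (FinitePlace K) :=
  {w | w.maximalIdeal ∈ S}

lemma placesOver_finite (S : Set (HeightOneSpectrum (𝓞 K))) (hS : S.Finite) :
    (placesOver S).Finite :=
  hS.preimage FinitePlace.maximalIdeal_injective.injOn

lemma finprod_le_prod (P : Set (FinitePlace K)) (hP : P.Finite) (x : K) (hx : x ≠ 0)
    (h : ∀ w ∉ P, w x ≤ 1) : ∏ᶠ w : FinitePlace K, w x ≤ ∏ w ∈ hP.toFinset, w x := by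
  classical
  have hf : (Function.mulSupport fun w : FinitePlace K => w x).Finite :=
    FinitePlace.hasFiniteMulSupport hx
  rw [finprod_eq_prod_of_mulSupport_subset (s := hf.toFinset ∪ hP.toFinset) _ (by
    intro w hw; simp only [Finset.coe_union, Set.Finite.coe_toFinset]; exact Or.inl hw)]
  rw [← Finset.prod_sdiff (Finset.subset_union_right : hP.toFinset ⊆ hf.toFinset ∪ hP.toFinset)]
  refine mul_le_of_le_one_left (Finset.prod_nonneg fun w _ => apply_nonneg w x) ?_
  refine Finset.prod_le_one (fun w _ => apply_nonneg w x) fun w hw => h w ?_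
  simpa using (Finset.mem_sdiff.mp hw).2

lemma finprod_max_eq (P : Set (FinitePlace K)) (hP : P.Finite) (x : K)
    (h : ∀ w ∉ P, w x ≤ 1) :
    ∏ᶠ w : FinitePlace K, max (w x) 1 = ∏ w ∈ hP.toFinset, max (w x) 1 := by
  refine finprod_eq_prod_of_mulSupport_subset _ ?_
  intro w hw
  rw [Set.Finite.coe_toFinset]
  by_contra hc
  exact hw (max_eq_right (h w hc))

theorem s_unit_aux (S : Set (HeightOneSpectrum (𝓞 K))) (hS : S.Finite) :
    {p : K × K | IsU (S.integer K).toSubring p.1 ∧ IsU (S.integer K).toSubring p.2 ∧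
      p.1 + p.2 = 1}.Finite := by
  classical
  have hP := placesOver_finite S hS
  have hle : ∀ x ∈ (S.integer K).toSubring, ∀ w ∉ placesOver S, w x ≤ 1 :=
    fun x hx w hw => finitePlace_le_one w x (hx w.maximalIdeal hw)
  let ι := InfinitePlace K ⊕ hP.toFinset
  let f : ι → AbsoluteValue K ℝ := Sum.elim (fun w => w.val) (fun w => w.val.val)
  let m : ι → ℕ := Sum.elim (fun w => w.mult) (fun _ => 1)
  refine abstract_finite f m (S.integer K).toSubring ?_ ?_ ?_
  · intro D hD hD0
    have h1 := prod_abs_eq_one hD0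
    have h2 := finprod_le_prod _ hP D hD0 (hle D hD)
    rw [Fintype.prod_sum_type]
    have h3 : ∏ w : hP.toFinset, f (Sum.inr w) D ^ m (Sum.inr w) = ∏ w ∈ hP.toFinset, w D := by
      simp only [f, m, Sum.elim_inr, pow_one]
      exact Finset.prod_coe_sort hP.toFinset (fun w => w D)
    rw [h3, ← h1]
    change _ ≤ (∏ w : InfinitePlace K, w D ^ w.mult) * _
    exact mul_le_mul_of_nonneg_left h2 (Finset.prod_nonneg fun w _ => pow_nonneg (apply_nonneg w D) _)
  · rintro (w | w)
    · exact InfinitePlace.mult_pos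
    · exact le_rfl
  · intro R
    refine (NumberField.finite_setOfPred_mulHeight₁_le K
      ((∏ w : InfinitePlace K, max R 1 ^ w.mult) * ∏ w ∈ hP.toFinset, max R 1)).subset ?_
    rintro x ⟨hx, hR⟩
    change Height.mulHeight₁ x ≤ _
    rw [NumberField.mulHeight₁_eq, finprod_max_eq _ hP x (hle x hx.2.1)]
    have hi : ∀ w : InfinitePlace K, w x ≤ R := fun w => hR (Sum.inl w)
    have hf : ∀ w ∈ hP.toFinset, w x ≤ R := fun w hw => hR (Sum.inr ⟨w, hw⟩)
    refine mul_le_mul ?_ ?_ (Finset.prod_nonneg fun w _ => by positivity)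
      (Finset.prod_nonneg fun w _ => by positivity)
    · refine Finset.prod_le_prod (fun w _ => by positivity) fun w _ => ?_
      gcongr
      exact hi w
    · refine Finset.prod_le_prod (fun w _ => by positivity) fun w hw => ?_
      gcongr
      exact hf w hw

end Final

open IsDedekindDomain NumberField

/-- The `S`-unit equation: for a number field `K` and a finite set `S` of maximal ideals of
its ring of integers, the equation `x + y = 1` has only finitely many solutions in `S`-units. -/
theorem s_unit_equation (K : Type*) [Field K] [NumberField K]
    (S : Set (HeightOneSpectrum (𝓞 K))) (hS : S.Finite) :
    {p : Kˣ × Kˣ | p.1 ∈ S.unit K ∧ p.2 ∈ S.unit K ∧ (p.1 : K) + (p.2 : K) = 1}.Finite := by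
  have hU : ∀ x : Kˣ, x ∈ S.unit K → IsU (S.integer K).toSubring (x : K) := by
    intro x hx
    refine ⟨x.ne_zero, fun v hv => (hx v hv).le, ?_⟩
    rw [← Units.val_inv_eq_inv_val]
    exact fun v hv => ((inv_mem hx : x⁻¹ ∈ S.unit K) v hv).le
  refine Set.Finite.of_finite_image (f := fun p : Kˣ × Kˣ => ((p.1 : K), (p.2 : K)))
    ((s_unit_aux S hS).subset ?_) ?_
  · rintro _ ⟨p, ⟨h1, h2, h3⟩, rfl⟩
    exact ⟨hU _ h1, hU _ h2, h3⟩
  · rintro p - q - h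
    simp only [Prod.mk.injEq, Units.val_inj] at h
    exact Prod.ext h.1 h.2
end
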